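/- arXiv:1712.08286 — 3 statements merged into one kernel-verified Lean document; each statement's English description precedes it below -/
import Mathlib

section
/- For every n ≥ 2 and every continuous function f : [0,1]^n → ℝ, there exist continuous functions ψ^{pq} : [0,1] → [0,1] (for p ∈ {1,…,n}, q ∈ {0,…,2n}) and continuous functions χ^q : ℝ → ℝ (for q ∈ {0,…,2n}) such that for all (x_1,…,x_n) ∈ [0,1]^n, f(x_1,…,x_n) = Σ_{q=0}^{2n} χ^q( Σ_{p=1}^n ψ^{pq}(x_p) ). -/
/-!
Kahane's Baire category proof, which produces inner functions `ψ` that serve all `f` at once.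

Cover `[0, 1]`, for each of `2n + 1` colours, by finitely many small disjoint closed intervals
(*islands*) such that each point is missed by at most one colour. A point of the cube then has all
its coordinates on islands for at least `n + 1` of the colours. An arbitrarily small perturbation
makes the inner functions of each colour constant on the islands, with generic constants, so that
`∑ p, ψ p q (x p)` identifies the product of islands containing `x`. An outer function of that
colour can then reproduce `f` up to `ε` on all these products, with norm at most `‖f‖`. Averaging
over the colours leaves an error of at most `ε + 2n / (2n + 1) * ‖f‖`: a majority of colours is
accurate, and the others contribute at most `2 ‖f‖` each. Hence, for `2n / (2n + 1) < θ < 1`, the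
inner functions that reduce a given `f ≠ 0` to a remainder smaller than `θ * ‖f‖` form a dense
open set. By Baire's theorem some inner functions do so for all `f` in a countable dense set, and
iterating on the remainder expresses every `f` as a convergent series of superpositions.
-/

open Set Function Filter Topology
open Fintype (card)
open scoped BoundedContinuousFunction

namespace KolmogorovSuperposition

section ApproximateSolutions

variable {E F : Type*} [NormedAddCommGroup E] [NormedSpace ℝ E] [CompleteSpace E]
  [NormedAddCommGroup F] [NormedSpace ℝ F]

theorem surjective_of_approximate_preimages (T : E →L[ℝ] F) {C θ : ℝ} (hC : 0 ≤ C) (hθ₀ : 0 ≤ θ)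
    (hθ₁ : θ < 1) (hT : ∀ g, ∃ e, ‖e‖ ≤ C * ‖g‖ ∧ ‖g - T e‖ ≤ θ * ‖g‖) : Surjective T := by
  intro g
  choose e norm_e_le norm_sub_le using hT
  let residual (k : ℕ) : F := (fun h ↦ h - T (e h))^[k] g
  have residual_succ (k) : residual (k + 1) = residual k - T (e (residual k)) :=
    iterate_succ_apply' _ _ _
  have norm_residual_le (k) : ‖residual k‖ ≤ θ ^ k * ‖g‖ := by
    induction k with
    | zero => simp [residual]
    | succ k ih =>
      calc ‖residual (k + 1)‖ ≤ θ * ‖residual k‖ := residual_succ k ▸ norm_sub_le _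
        _ ≤ θ * (θ ^ k * ‖g‖) := by gcongr
        _ = θ ^ (k + 1) * ‖g‖ := by ring
  have summable_e : Summable fun k ↦ e (residual k) := by
    refine .of_norm_bounded (g := fun k ↦ C * (θ ^ k * ‖g‖))
      (((summable_geometric_of_lt_one hθ₀ hθ₁).mul_right _).mul_left _) fun k ↦ ?_
    exact (norm_e_le _).trans (mul_le_mul_of_nonneg_left (norm_residual_le k) hC)
  have sum_eq (m) : ∑ k ∈ Finset.range m, T (e (residual k)) = g - residual m := by
    have telescope (k) : T (e (residual k)) = residual k - residual (k + 1) := by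
      rw [residual_succ, sub_sub_cancel]
    simp_rw [telescope]
    exact Finset.sum_range_sub' residual m
  have residual_tendsto : Tendsto residual atTop (𝓝 0) := by
    refine squeeze_zero_norm norm_residual_le ?_
    simpa using (tendsto_pow_atTop_nhds_zero_of_lt_one hθ₀ hθ₁).mul_const ‖g‖
  refine ⟨∑' k, e (residual k), tendsto_nhds_unique (T.hasSum summable_e.hasSum).tendsto_sum_nat ?_⟩
  simpa only [sum_eq, sub_zero] using residual_tendsto.const_sub g

theorem surjective_of_dense_approximate_preimages (T : E →L[ℝ] F) {S : Set F} (hS : Dense S)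
    {C θ : ℝ} (hC : 0 ≤ C) (hθ₀ : 0 ≤ θ) (hθ₁ : θ < 1)
    (hT : ∀ s ∈ S, s ≠ 0 → ∃ e, ‖e‖ ≤ C * ‖s‖ ∧ ‖s - T e‖ ≤ θ * ‖s‖) : Surjective T := by
  obtain ⟨ρ, hρ₀, hρ₁⟩ : ∃ ρ, 0 < ρ ∧ ρ + θ * (1 + ρ) < 1 :=
    ⟨(1 - θ) / 4, by linarith, by nlinarith⟩
  refine surjective_of_approximate_preimages T (C := C * (1 + ρ)) (by positivity) (by positivity)
    hρ₁ fun g ↦ ?_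
  rcases eq_or_ne g 0 with rfl | hg
  · exact ⟨0, by simp⟩
  have hg_pos : 0 < ‖g‖ := norm_pos_iff.2 hg
  obtain ⟨s, hsS, hs⟩ := hS.exists_dist_lt g (mul_pos hρ₀ hg_pos)
  rw [dist_eq_norm] at hs
  have hs_ne : s ≠ 0 := by
    rintro rfl
    rw [sub_zero] at hs
    nlinarith
  have norm_s_le : ‖s‖ ≤ (1 + ρ) * ‖g‖ := by
    linarith [norm_sub_norm_le s g, norm_sub_rev s g]
  obtain ⟨e, he, hse⟩ := hT s hsS hs_ne
  refine ⟨e, ?_, ?_⟩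
  · calc ‖e‖ ≤ C * ‖s‖ := he
      _ ≤ C * ((1 + ρ) * ‖g‖) := by gcongr
      _ = C * (1 + ρ) * ‖g‖ := by ring
  · calc ‖g - T e‖ ≤ ‖g - s‖ + ‖s - T e‖ := norm_sub_le_norm_sub_add_norm_sub _ _ _
      _ ≤ ρ * ‖g‖ + θ * ((1 + ρ) * ‖g‖) := by gcongr; exact hse.trans (by gcongr)
      _ = (ρ + θ * (1 + ρ)) * ‖g‖ := by ring

end ApproximateSolutions

section GenericSums

variable {ι α : Type*} [Fintype ι]

theorem dense_setOf_sum_ne_sum {i j : ι → α} (hij : i ≠ j) :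
    Dense {v : ι → α → ℝ | ∑ p, v p (i p) ≠ ∑ p, v p (j p)} := by
  classical
  let L : (ι → α → ℝ) →ₗ[ℝ] ℝ :=
    ∑ p, (.proj (i p) - .proj (j p) : (α → ℝ) →ₗ[ℝ] ℝ) ∘ₗ .proj p
  have L_apply (v) : L v = ∑ p, v p (i p) - ∑ p, v p (j p) := by simp [L]
  have compl_ker : {v : ι → α → ℝ | ∑ p, v p (i p) ≠ ∑ p, v p (j p)} = (L.ker : Set _)ᶜ := by
    ext v
    simp [L_apply, sub_eq_zero]
  rw [compl_ker, ← interior_eq_empty_iff_dense_compl, ← not_nonempty_iff_eq_empty]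
  intro h
  obtain ⟨p, hp⟩ := Function.ne_iff.1 hij
  have L_eq_zero : L = 0 := LinearMap.ker_eq_top.1 (Submodule.eq_top_of_nonempty_interior' _ h)
  have L_single : L (Pi.single p (Pi.single (i p) 1)) = 1 := by
    rw [L_apply, Finset.sum_eq_single p, Finset.sum_eq_single p] <;>
      simp +contextual [hp.symm]
  simp [L_eq_zero] at L_single

theorem dense_setOf_injective_sum [Finite α] :
    Dense {v : ι → α → ℝ | Injective fun i : ι → α ↦ ∑ p, v p (i p)} := by
  have eq_iInter : {v : ι → α → ℝ | Injective fun i : ι → α ↦ ∑ p, v p (i p)} =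
      ⋂ ij : {ij : (ι → α) × (ι → α) // ij.1 ≠ ij.2},
        {v | ∑ p, v p (ij.1.1 p) ≠ ∑ p, v p (ij.1.2 p)} := by
    ext v
    simp [Injective, not_imp_not]
  rw [eq_iInter]
  refine dense_iInter_of_isOpen (fun ij ↦ ?_) fun ij ↦ dense_setOf_sum_ne_sum ij.2
  exact isOpen_ne_fun (by fun_prop) (by fun_prop)

theorem exists_injective_sum_near [Finite α] (a : ι → α → ℝ) {δ : ℝ} (hδ : 0 < δ) :
    ∃ v : ι → α → ℝ, (∀ p i, |v p i - a p i| ≤ δ) ∧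
      Injective fun i : ι → α ↦ ∑ p, v p (i p) := by
  have := Fintype.ofFinite α
  obtain ⟨v, hv, hva⟩ := dense_setOf_injective_sum.exists_dist_lt a hδ
  refine ⟨v, fun p i ↦ ?_, hv⟩
  calc |v p i - a p i| = dist (a p i) (v p i) := abs_sub_comm _ _
    _ ≤ dist (a p) (v p) := dist_le_pi_dist _ _ i
    _ ≤ dist a v := dist_le_pi_dist _ _ p
    _ ≤ δ := hva.le

end GenericSums

section Extension

variable {X α : Type*} [TopologicalSpace X] [Finite α] {A : α → Set X}

theorem exists_continuousOn_iUnion_eq_const {β : Type*} [TopologicalSpace β] [Nonempty β]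
    (hA_closed : ∀ i, IsClosed (A i)) (hA_disj : Pairwise (Disjoint on A)) (v : α → β) :
    ∃ h : X → β, ContinuousOn h (⋃ i, A i) ∧ ∀ i, ∀ x ∈ A i, h x = v i := by
  have value (x) : ∃ c, ∀ i, x ∈ A i → c = v i := by
    by_cases hx : ∃ j, x ∈ A j
    · obtain ⟨j, hj⟩ := hx
      refine ⟨v j, fun i hi ↦ congrArg v ?_⟩
      exact hA_disj.eq (not_disjoint_iff.2 ⟨x, hj, hi⟩)
    · exact ⟨Classical.arbitrary β, fun i hi ↦ absurd ⟨i, hi⟩ hx⟩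
  choose h hh using value
  refine ⟨h, ?_, fun i x ↦ hh x i⟩
  exact (locallyFinite_of_finite A).continuousOn_iUnion hA_closed fun i ↦
    continuousOn_const.congr fun x ↦ hh x i

variable [NormalSpace X]

theorem exists_continuousMap_eqOn_abs_sub_le {s : Set X} (hs : IsClosed s) (ψ : C(X, ℝ))
    {h : X → ℝ} (hh : ContinuousOn h s) {B : ℝ} (hB : 0 ≤ B) (hB_le : ∀ x ∈ s, |h x - ψ x| ≤ B) :
    ∃ φ : C(X, ℝ), (∀ x, |φ x - ψ x| ≤ B) ∧ EqOn φ h s := by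
  let d : s →ᵇ ℝ := .ofNormedAddCommGroup (fun x ↦ h x - ψ x)
    ((continuousOn_iff_continuous_domRestrict.1 hh).sub (by fun_prop)) B fun x ↦ hB_le x x.2
  obtain ⟨g, norm_g, g_eq⟩ := d.exists_norm_eq_domRestrict_eq_of_closed hs
  have norm_g_le : ‖g‖ ≤ B := norm_g.trans_le <|
    BoundedContinuousFunction.norm_ofNormedAddCommGroup_le _ hB _
  refine ⟨ψ + g.toContinuousMap, fun x ↦ ?_, fun x hx ↦ ?_⟩
  · simpa using (g.norm_coe_le_norm x).trans norm_g_le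
  · have g_apply : g x = h x - ψ x := DFunLike.congr_fun g_eq (⟨x, hx⟩ : s)
    simp [g_apply]

theorem exists_continuousMap_eq_const_abs_sub_le (hA_closed : ∀ i, IsClosed (A i))
    (hA_disj : Pairwise (Disjoint on A)) (ψ : C(X, ℝ)) (v : α → ℝ) {B : ℝ} (hB : 0 ≤ B)
    (hB_le : ∀ i, ∀ x ∈ A i, |v i - ψ x| ≤ B) :
    ∃ φ : C(X, ℝ), (∀ x, |φ x - ψ x| ≤ B) ∧ ∀ i, ∀ x ∈ A i, φ x = v i := by
  obtain ⟨h, hh, h_eq⟩ := exists_continuousOn_iUnion_eq_const hA_closed hA_disj v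
  obtain ⟨φ, hφ, φ_eq⟩ := exists_continuousMap_eqOn_abs_sub_le
    (isClosed_iUnion_of_finite hA_closed) ψ hh hB fun x hx ↦ by
      obtain ⟨i, hi⟩ := mem_iUnion.1 hx
      exact h_eq i x hi ▸ hB_le i x hi
  exact ⟨φ, hφ, fun i x hx ↦ (φ_eq (mem_iUnion_of_mem i hx)).trans (h_eq i x hx)⟩

theorem exists_boundedContinuousFunction_interpolating [T1Space X] {V : α → X} (hV : Injective V)
    (c : α → ℝ) {B : ℝ} (hB : 0 ≤ B) (hc : ∀ i, |c i| ≤ B) :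
    ∃ χ : X →ᵇ ℝ, ‖χ‖ ≤ B ∧ ∀ i, χ (V i) = c i := by
  obtain ⟨φ, hφ, φ_eq⟩ := exists_continuousMap_eq_const_abs_sub_le (A := fun i ↦ {V i})
    (fun _ ↦ isClosed_singleton) (fun i j hij ↦ disjoint_singleton.2 (hV.ne hij)) 0 c hB
    (by simpa using hc)
  replace hφ (x) : ‖φ x‖ ≤ B := by simpa using hφ x
  exact ⟨.ofNormedAddCommGroup φ φ.continuous B hφ,
    BoundedContinuousFunction.norm_ofNormedAddCommGroup_le _ hB hφ, fun i ↦ φ_eq i _ rfl⟩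

end Extension

section Normalization

variable {ι κ X : Type*} [Finite ι] [Finite κ] [TopologicalSpace X] [CompactSpace X]

theorem exists_affine_mem_Icc (Ψ : ι → κ → C(X, ℝ)) :
    ∃ a b : ℝ, a ≠ 0 ∧ ∀ p q x, (a • Ψ p q + .const X b) x ∈ Icc (0 : ℝ) 1 := by
  have := Fintype.ofFinite ι
  have := Fintype.ofFinite κ
  refine ⟨(2 * (‖Ψ‖ + 1))⁻¹, 2⁻¹, by positivity, fun p q x ↦ ?_⟩
  have abs_le_norm : |Ψ p q x| ≤ ‖Ψ‖ :=
    calc |Ψ p q x| ≤ ‖Ψ p q‖ := (Ψ p q).norm_coe_le_norm x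
      _ ≤ ‖Ψ p‖ := norm_le_pi_norm _ q
      _ ≤ ‖Ψ‖ := norm_le_pi_norm _ p
  have apply_eq : ((2 * (‖Ψ‖ + 1))⁻¹ • Ψ p q + .const X 2⁻¹ : C(X, ℝ)) x =
      (Ψ p q x + (‖Ψ‖ + 1)) / (2 * (‖Ψ‖ + 1)) := by
    have : ‖Ψ‖ + 1 ≠ 0 := by positivity
    simp only [ContinuousMap.add_apply, ContinuousMap.smul_apply, ContinuousMap.const_apply,
      smul_eq_mul]
    field_simp
  obtain ⟨lower, upper⟩ := abs_le.1 abs_le_norm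
  rw [apply_eq]
  exact ⟨div_nonneg (by linarith) (by positivity), (div_le_one (by positivity)).2 (by linarith)⟩

end Normalization

section Superposition

variable {ι κ X : Type*} [Fintype ι] [Fintype κ] [TopologicalSpace X] [CompactSpace X]

/-- For fixed inner functions `Ψ`, the operator sending outer functions `χ` to the superposition
`x ↦ ∑ q, χ q (∑ p, Ψ p q (x p))`. The outer functions are taken bounded so that they form a
Banach space. -/
noncomputable def superposition (Ψ : ι → κ → C(X, ℝ)) : (κ → ℝ →ᵇ ℝ) →L[ℝ] C(ι → X, ℝ) :=
  LinearMap.mkContinuous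
    { toFun := fun χ ↦ ∑ q, (χ q).toContinuousMap.comp (∑ p, (Ψ p q).comp (.eval p))
      map_add' := fun χ χ' ↦ by ext x; simp [Finset.sum_add_distrib]
      map_smul' := fun c χ ↦ by ext x; simp [Finset.mul_sum] }
    (card κ) fun χ ↦ by
      refine (norm_sum_le_of_le (f := fun q ↦ (χ q).toContinuousMap.comp _) Finset.univ
        fun q _ ↦ (ContinuousMap.norm_le _ (norm_nonneg χ)).2 fun x ↦ ?_).trans_eq (by simp)
      exact ((χ q).norm_coe_le_norm _).trans (norm_le_pi_norm χ q)

@[simp]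
theorem superposition_apply (Ψ : ι → κ → C(X, ℝ)) (χ : κ → ℝ →ᵇ ℝ) (x : ι → X) :
    superposition Ψ χ x = ∑ q, χ q (∑ p, Ψ p q (x p)) := by
  simp [superposition, ContinuousMap.sum_apply]

theorem continuous_superposition_left (χ : κ → ℝ →ᵇ ℝ) :
    Continuous fun Ψ : ι → κ → C(X, ℝ) ↦ superposition Ψ χ := by
  refine continuous_finsetSum _ fun q _ ↦ (ContinuousMap.continuous_postcomp _).comp ?_
  refine continuous_finsetSum _ fun p _ ↦ (ContinuousMap.continuous_precomp _).comp ?_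
  fun_prop

theorem surjective_superposition_affine {Ψ : ι → κ → C(X, ℝ)}
    (hΨ : Surjective (superposition Ψ)) {a : ℝ} (ha : a ≠ 0) (b : ℝ) :
    Surjective (superposition fun p q ↦ a • Ψ p q + .const X b) := by
  intro f
  obtain ⟨χ, rfl⟩ := hΨ f
  let undo : C(ℝ, ℝ) := ⟨fun t ↦ a⁻¹ * (t - card ι * b), by fun_prop⟩
  refine ⟨fun q ↦ (χ q).compContinuous undo, ?_⟩
  ext x
  simp [undo, Finset.sum_add_distrib, ← Finset.mul_sum, ha]

end Superposition

section Islands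

variable {ι κ α X : Type*} [PseudoMetricSpace X]

/-- Kolmogorov's islands: for each colour `q : κ`, a family of pairwise disjoint closed sets of
diameter less than `η`, such that each point is left uncovered by at most one colour. -/
structure IsIslandFamily (A : κ → α → Set X) (η : ℝ) : Prop where
  isClosed : ∀ q i, IsClosed (A q i)
  pairwise_disjoint : ∀ q, Pairwise (Disjoint on A q)
  dist_lt : ∀ q i, ∀ x ∈ A q i, ∀ y ∈ A q i, dist x y < η
  subsingleton_uncovered : ∀ x, {q | x ∉ ⋃ i, A q i}.Subsingleton

/-- Existence of arbitrarily fine island families with finitely many islands of each colour. For a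
compact metric space and at least two colours this says, by a theorem of Ostrand, that the covering
dimension is at most one. -/
def HasFineIslands (κ X : Type*) [PseudoMetricSpace X] : Prop :=
  ∀ η > 0, ∃ (m : ℕ) (A : κ → Fin m → Set X), IsIslandFamily A η

theorem IsIslandFamily.ncard_uncovered_le [Fintype ι] [Finite κ] {A : κ → α → Set X} {η : ℝ}
    (hA : IsIslandFamily A η) (x : ι → X) :
    {q | ∃ p, x p ∉ ⋃ i, A q i}.ncard ≤ card ι := by
  rw [ofPred_exists]
  calc (⋃ p, {q | x p ∉ ⋃ i, A q i}).ncard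
      ≤ ∑ p, {q | x p ∉ ⋃ i, A q i}.ncard := ncard_iUnion_le_of_fintype _
    _ ≤ ∑ _p : ι, 1 := Finset.sum_le_sum fun p _ ↦
        ncard_le_one_iff_subsingleton.2 (hA.subsingleton_uncovered (x p))
    _ = card ι := by simp

theorem IsIslandFamily.comp_injective {κ' : Type*} {A : κ → α → Set X} {η : ℝ}
    (hA : IsIslandFamily A η) {e : κ' → κ} (he : Injective e) :
    IsIslandFamily (fun q ↦ A (e q)) η where
  isClosed q := hA.isClosed (e q)
  pairwise_disjoint q := hA.pairwise_disjoint (e q)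
  dist_lt q := hA.dist_lt (e q)
  subsingleton_uncovered x := (hA.subsingleton_uncovered x).preimage he

end Islands

section UnitInterval

theorem eq_of_one_sub_lt_fract {m : ℕ} {t : ℝ} {q q' : Fin m}
    (hq : 1 - 1 / m < Int.fract (t + q / m : ℝ)) (hq' : 1 - 1 / m < Int.fract (t + q' / m : ℝ)) :
    q = q' := by
  wlog hlt : q < q' generalizing q q'
  · rcases (not_lt.1 hlt).eq_or_lt with heq | hgt
    · exact heq.symm
    · exact (this hq' hq hgt).symm
  have hm : (0 : ℝ) < m := Nat.cast_pos.2 q.pos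
  have shift_ge : 1 / (m : ℝ) ≤ q' / m - q / m := by
    rw [← sub_div]
    gcongr
    have : (q : ℝ) + 1 ≤ q' := mod_cast hlt
    linarith
  have shift_le : q' / m - q / m ≤ 1 - 1 / (m : ℝ) := by
    rw [← sub_div, one_sub_div hm.ne']
    refine div_le_div_of_nonneg_right ?_ hm.le
    have : (q' : ℝ) + 1 ≤ m := mod_cast q'.2
    have : (0 : ℝ) ≤ q := Nat.cast_nonneg _
    linarith
  rw [← Int.self_sub_floor] at hq hq'
  have floor_lt : ⌊t + q / m⌋ < ⌊t + q' / m⌋ := by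
    have := Int.lt_floor_add_one (t + q' / m : ℝ)
    exact_mod_cast (by linarith : (⌊t + q / m⌋ : ℝ) < ⌊t + q' / m⌋)
  have floor_lt_add_one : ⌊t + q' / m⌋ < ⌊t + q / m⌋ + 1 := by
    have := Int.lt_floor_add_one (t + q / m : ℝ)
    exact_mod_cast (by linarith : (⌊t + q' / m⌋ : ℝ) < ⌊t + q / m⌋ + 1)
  lia

/-- The `i`-th island of colour `q` in `[0, 1]`, when `m` colours are used. The islands of a colour
are intervals of length `(1 - 1 / m) / N` separated by gaps of length `1 / (m * N)`; changing the
colour translates them by multiples of the gap length, so that gaps of different colours are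
disjoint. -/
def unitIntervalIsland (m N : ℕ) (q : Fin m) (i : Fin (N + 1)) : Set unitInterval :=
  {x | (N * x + q / m : ℝ) ∈ Icc (i : ℝ) (i + (1 - 1 / m))}

theorem mem_iUnion_unitIntervalIsland {m N : ℕ} {q : Fin m} {x : unitInterval}
    (hx : Int.fract (N * x + q / m : ℝ) ≤ 1 - 1 / m) : x ∈ ⋃ i, unitIntervalIsland m N q i := by
  set y : ℝ := N * x + q / m with hy
  have y_nonneg : 0 ≤ y := add_nonneg (mul_nonneg N.cast_nonneg x.2.1) (by positivity)
  have hm : (0 : ℝ) < m := Nat.cast_pos.2 q.pos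
  have floor_lt : ⌊y⌋₊ < N + 1 := by
    rw [Nat.floor_lt y_nonneg, Nat.cast_add_one]
    have hq : (q / m : ℝ) < 1 := (div_lt_one hm).2 (mod_cast q.2)
    exact add_lt_add_of_le_of_lt (mul_le_of_le_one_right N.cast_nonneg x.2.2) hq
  have floor_add_fract : (⌊y⌋₊ : ℝ) + Int.fract y = y := by
    rw [natCast_floor_eq_intCast_floor y_nonneg, Int.floor_add_fract]
  exact mem_iUnion.2 ⟨⟨⌊y⌋₊, floor_lt⟩, Nat.floor_le y_nonneg, by simp only [← hy]; linarith⟩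

theorem isIslandFamily_unitIntervalIsland (m : ℕ) {N : ℕ} (hN : 0 < N) {η : ℝ}
    (hη : 1 / (N : ℝ) < η) : IsIslandFamily (unitIntervalIsland m N) η where
  isClosed q i := isClosed_Icc.preimage (by fun_prop)
  pairwise_disjoint q := by
    refine pairwise_disjoint_on _ |>.2 fun i j hij ↦ disjoint_left.2 fun x hxi hxj ↦ ?_
    have gap : (0 : ℝ) < 1 / m := one_div_pos.2 (Nat.cast_pos.2 q.pos)
    have succ_le : (i : ℝ) + 1 ≤ j := mod_cast hij
    linarith [hxi.2, hxj.1]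
  dist_lt q i x hx y hy := by
    refine lt_of_le_of_lt ?_ hη
    have hN' : (0 : ℝ) < N := Nat.cast_pos.2 hN
    have gap : (0 : ℝ) ≤ 1 / m := by positivity
    have mul_dist_le : dist (N * x + q / m : ℝ) (N * y + q / m) ≤ 1 :=
      (Real.dist_le_of_mem_Icc hx hy).trans (by linarith)
    rwa [Real.dist_eq, add_sub_add_right_eq_sub, ← mul_sub, abs_mul, abs_of_pos hN', mul_comm,
      ← le_div_iff₀ hN'] at mul_dist_le
  subsingleton_uncovered x q hq q' hq' :=
    eq_of_one_sub_lt_fract (not_le.1 (mt mem_iUnion_unitIntervalIsland hq))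
      (not_le.1 (mt mem_iUnion_unitIntervalIsland hq'))

theorem hasFineIslands_unitInterval (κ : Type*) [Finite κ] : HasFineIslands κ unitInterval := by
  intro η hη
  obtain ⟨N, hN⟩ := exists_nat_one_div_lt hη
  exact ⟨_, _, (isIslandFamily_unitIntervalIsland (Nat.card κ) N.succ_pos (by exact_mod_cast hN))
    |>.comp_injective (Finite.equivFin κ).injective⟩

end UnitInterval

section ApproximationStep

variable {ι κ α X : Type*} [Fintype ι]

theorem abs_sub_average_le [Fintype κ] [Nonempty κ] {y B ε : ℝ} {c : κ → ℝ} (bad : Finset κ)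
    (hε : 0 ≤ ε) (hy : |y| ≤ B) (hc : ∀ q, |c q| ≤ B) (hgood : ∀ q ∉ bad, |y - c q| ≤ ε) :
    |y - (card κ : ℝ)⁻¹ * ∑ q, c q| ≤ ε + 2 * bad.card / card κ * B := by
  classical
  have hκ : (0 : ℝ) < card κ := Nat.cast_pos.2 Fintype.card_pos
  have term_le (q) : |y - c q| ≤ ε + if q ∈ bad then 2 * B else 0 := by
    split_ifs with hq
    · linarith [abs_sub y (c q), hc q]
    · simpa using hgood q hq
  have y_eq : y = (card κ : ℝ)⁻¹ * ∑ _q : κ, y := by simp [hκ.ne']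
  calc |y - (card κ : ℝ)⁻¹ * ∑ q, c q|
      = (card κ : ℝ)⁻¹ * |∑ q, (y - c q)| := by
        rw [← abs_of_pos (inv_pos.2 hκ), ← abs_mul, abs_of_pos (inv_pos.2 hκ),
          Finset.sum_sub_distrib, mul_sub, ← y_eq]
    _ ≤ (card κ : ℝ)⁻¹ * ∑ q, (ε + if q ∈ bad then 2 * B else 0) := by
        gcongr
        exact (Finset.abs_sum_le_sum_abs _ _).trans (Finset.sum_le_sum fun q _ ↦ term_le q)
    _ = ε + 2 * bad.card / card κ * B := by
        simp only [Finset.sum_add_distrib, Finset.sum_const, Finset.card_univ, nsmul_eq_mul,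
          Finset.sum_ite_mem, Finset.univ_inter]
        rw [mul_add, inv_mul_cancel_left₀ hκ.ne']
        ring

variable [PseudoMetricSpace X]

theorem exists_center [Nonempty X] {s : Set X} {η : ℝ} (hs : ∀ x ∈ s, ∀ y ∈ s, dist x y < η) :
    ∃ c, ∀ x ∈ s, dist x c < η := by
  rcases s.eq_empty_or_nonempty with rfl | ⟨c, hc⟩
  · exact ⟨Classical.arbitrary X, by simp⟩
  · exact ⟨c, fun x hx ↦ hs x hx c hc⟩

variable [CompactSpace X]

theorem exists_forall_dist_lt_imp_abs_sub_le [Finite α] (g : α → C(X, ℝ)) {δ : ℝ} (hδ : 0 < δ) :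
    ∃ η > 0, ∀ i x y, dist x y < η → |g i x - g i y| ≤ δ := by
  have := Fintype.ofFinite α
  have joint_continuous : Continuous fun x i ↦ g i x := by fun_prop
  obtain ⟨η, hη, osc⟩ := Metric.uniformContinuous_iff.1
    (CompactSpace.uniformContinuous_of_continuous joint_continuous) δ hδ
  exact ⟨η, hη, fun i x y hxy ↦
    (dist_le_pi_dist (fun i ↦ g i x) (fun i ↦ g i y) i).trans (osc hxy).le⟩

theorem exists_near_separating_inner [Finite α] {A : α → Set X} (hA_closed : ∀ i, IsClosed (A i))
    (hA_disj : Pairwise (Disjoint on A)) {η : ℝ} {c : α → X} (hc : ∀ i, ∀ x ∈ A i, dist x (c i) < η)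
    {Ψ₀ : ι → C(X, ℝ)} {δ : ℝ} (hδ : 0 < δ)
    (hΨ₀ : ∀ p x y, dist x y < η → |Ψ₀ p x - Ψ₀ p y| ≤ δ) :
    ∃ (Ψ : ι → C(X, ℝ)) (v : ι → α → ℝ), (∀ p, dist (Ψ p) (Ψ₀ p) ≤ 2 * δ) ∧
      (∀ p i, ∀ x ∈ A i, Ψ p x = v p i) ∧ Injective fun i : ι → α ↦ ∑ p, v p (i p) := by
  obtain ⟨v, hv, v_inj⟩ := exists_injective_sum_near (fun p i ↦ Ψ₀ p (c i)) hδ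
  have v_near (p i) (x) (hx : x ∈ A i) : |v p i - Ψ₀ p x| ≤ 2 * δ := by
    have osc := hΨ₀ p x (c i) (hc i x hx)
    rw [abs_sub_comm] at osc
    linarith [abs_sub_le (v p i) (Ψ₀ p (c i)) (Ψ₀ p x), hv p i]
  choose Ψ hΨ Ψ_eq using fun p ↦ exists_continuousMap_eq_const_abs_sub_le hA_closed hA_disj (Ψ₀ p)
    (v p) (by positivity) (v_near p)
  exact ⟨Ψ, v, fun p ↦ (ContinuousMap.dist_le (by positivity)).2 (hΨ p), Ψ_eq, v_inj⟩

theorem exists_near_inner_approximating [Finite α] [Nonempty X] {A : α → Set X}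
    (hA_closed : ∀ i, IsClosed (A i)) (hA_disj : Pairwise (Disjoint on A)) {η : ℝ} (hη : 0 < η)
    (hA_dist : ∀ i, ∀ x ∈ A i, ∀ y ∈ A i, dist x y < η)
    {Ψ₀ : ι → C(X, ℝ)} {δ : ℝ} (hδ : 0 < δ) (hΨ₀ : ∀ p x y, dist x y < η → |Ψ₀ p x - Ψ₀ p y| ≤ δ)
    {f : C(ι → X, ℝ)} {ε : ℝ} (hf : ∀ x y, dist x y < η → |f x - f y| ≤ ε) :
    ∃ (Ψ : ι → C(X, ℝ)) (χ : ℝ →ᵇ ℝ), (∀ p, dist (Ψ p) (Ψ₀ p) ≤ 2 * δ) ∧ ‖χ‖ ≤ ‖f‖ ∧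
      ∀ x : ι → X, (∀ p, x p ∈ ⋃ i, A i) → |f x - χ (∑ p, Ψ p (x p))| ≤ ε := by
  choose c hc using fun i ↦ exists_center (hA_dist i)
  obtain ⟨Ψ, v, Ψ_near, Ψ_eq, v_inj⟩ := exists_near_separating_inner hA_closed hA_disj hc hδ hΨ₀
  obtain ⟨χ, norm_χ, χ_eq⟩ := exists_boundedContinuousFunction_interpolating v_inj
    (fun i ↦ f fun p ↦ c (i p)) (norm_nonneg f) fun i ↦ f.norm_coe_le_norm _
  refine ⟨Ψ, χ, Ψ_near, norm_χ, fun x hx ↦ ?_⟩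
  choose i hi using fun p ↦ mem_iUnion.1 (hx p)
  rw [Finset.sum_congr rfl fun p _ ↦ Ψ_eq p (i p) (x p) (hi p), χ_eq i]
  exact hf _ _ ((dist_pi_lt_iff hη).2 fun p ↦ hc (i p) (x p) (hi p))

variable [Fintype κ]

theorem IsIslandFamily.norm_sub_superposition_le [Nonempty κ] {A : κ → α → Set X} {η : ℝ}
    (hA : IsIslandFamily A η) {f : C(ι → X, ℝ)} {Ψ : ι → κ → C(X, ℝ)} {χ : κ → ℝ →ᵇ ℝ} {ε : ℝ}
    (hε : 0 ≤ ε) (hχ : ∀ q, ‖χ q‖ ≤ ‖f‖)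
    (happrox : ∀ q (x : ι → X), (∀ p, x p ∈ ⋃ i, A q i) → |f x - χ q (∑ p, Ψ p q (x p))| ≤ ε) :
    ‖f - superposition Ψ ((card κ : ℝ)⁻¹ • χ)‖ ≤ ε + 2 * card ι / card κ * ‖f‖ := by
  classical
  refine (ContinuousMap.norm_le _ (by positivity)).2 fun x ↦ ?_
  let bad : Finset κ := {q | ∃ p, x p ∉ ⋃ i, A q i}
  have card_bad_le : bad.card ≤ card ι := by
    simpa [bad, ← ncard_coe_finset] using hA.ncard_uncovered_le x
  calc ‖(f - superposition Ψ ((card κ : ℝ)⁻¹ • χ)) x‖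
      = |f x - (card κ : ℝ)⁻¹ * ∑ q, χ q (∑ p, Ψ p q (x p))| := by simp [Finset.mul_sum]
    _ ≤ ε + 2 * bad.card / card κ * ‖f‖ :=
        abs_sub_average_le bad hε (f.norm_coe_le_norm x)
          (fun q ↦ ((χ q).norm_coe_le_norm _).trans (hχ q))
          fun q hq ↦ happrox q x (by simpa [bad] using hq)
    _ ≤ ε + 2 * card ι / card κ * ‖f‖ := by gcongr

end ApproximationStep

section Category

variable {ι κ X : Type*} [Fintype ι] [Fintype κ]

variable (κ) in
/-- The families of inner functions for which some outer functions, no larger than `f`, reduce `f`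
to a remainder of norm less than `θ * ‖f‖`. -/
def approximatingFamilies [TopologicalSpace X] [CompactSpace X]
    (f : C(ι → X, ℝ)) (θ : ℝ) : Set (ι → κ → C(X, ℝ)) :=
  {Ψ | ∃ χ : κ → ℝ →ᵇ ℝ, ‖χ‖ ≤ ‖f‖ ∧ ‖f - superposition Ψ χ‖ < θ * ‖f‖}

theorem isOpen_approximatingFamilies [TopologicalSpace X] [CompactSpace X] (f : C(ι → X, ℝ))
    (θ : ℝ) : IsOpen (approximatingFamilies κ f θ) := by
  simp only [approximatingFamilies, ofPred_exists, ofPred_and]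
  refine isOpen_iUnion fun χ ↦ isOpen_const.inter ?_
  exact isOpen_lt (continuous_const.sub (continuous_superposition_left χ)).norm continuous_const

variable [PseudoMetricSpace X] [CompactSpace X] [Nonempty X]

theorem dense_approximatingFamilies [Nonempty κ] (hX : HasFineIslands κ X) {f : C(ι → X, ℝ)}
    (hf : f ≠ 0) {θ : ℝ} (hθ : 2 * card ι / card κ < θ) :
    Dense (approximatingFamilies κ f θ) := by
  refine Metric.dense_iff.2 fun Ψ₀ ρ hρ ↦ ?_
  have hf_pos : 0 < ‖f‖ := norm_pos_iff.2 hf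
  obtain ⟨ε, hε, hεθ⟩ := exists_between (mul_pos (sub_pos.2 hθ) hf_pos)
  have hδ : 0 < ρ / 4 := by positivity
  obtain ⟨η₁, hη₁, f_osc⟩ := Metric.uniformContinuous_iff.1
    (CompactSpace.uniformContinuous_of_continuous f.continuous) ε hε
  obtain ⟨η₂, hη₂, Ψ₀_osc⟩ := exists_forall_dist_lt_imp_abs_sub_le
    (fun pq : ι × κ ↦ Ψ₀ pq.1 pq.2) hδ
  obtain ⟨m, A, hA⟩ := hX (min η₁ η₂) (lt_min hη₁ hη₂)
  choose Ψ χ Ψ_near norm_χ hfχ using fun q ↦ exists_near_inner_approximating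
    (hA.isClosed q) (hA.pairwise_disjoint q) (lt_min hη₁ hη₂) (hA.dist_lt q)
    (Ψ₀ := fun p ↦ Ψ₀ p q) hδ
    (fun p x y hxy ↦ Ψ₀_osc (p, q) x y (hxy.trans_le (min_le_right _ _)))
    fun x y hxy ↦ (f_osc (hxy.trans_le (min_le_left _ _))).le
  refine ⟨fun p q ↦ Ψ q p, ?_, (card κ : ℝ)⁻¹ • χ, ?_, ?_⟩
  · have dist_le : dist (fun p q ↦ Ψ q p) Ψ₀ ≤ 2 * (ρ / 4) :=
      (dist_pi_le_iff (by positivity)).2 fun p ↦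
        (dist_pi_le_iff (by positivity)).2 fun q ↦ Ψ_near q p
    exact Metric.mem_ball.2 (by linarith)
  · rw [norm_smul, norm_inv, Real.norm_natCast]
    refine (mul_le_of_le_one_left (norm_nonneg χ) ?_).trans
      ((pi_norm_le_iff_of_nonneg hf_pos.le).2 norm_χ)
    exact inv_le_one_of_one_le₀ (mod_cast Fintype.card_pos)
  · linarith [hA.norm_sub_superposition_le hε.le norm_χ hfχ]

theorem exists_surjective_superposition (hX : HasFineIslands κ X) (hκ : 2 * card ι < card κ) :
    ∃ Ψ : ι → κ → C(X, ℝ), Surjective (superposition Ψ) := by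
  have : Nonempty κ := Fintype.card_pos_iff.1 (by lia)
  have ratio_lt_one : 2 * card ι / card κ < (1 : ℝ) :=
    (div_lt_one (Nat.cast_pos.2 Fintype.card_pos)).2 (mod_cast hκ)
  obtain ⟨θ, hθ, hθ₁⟩ := exists_between ratio_lt_one
  obtain ⟨S, S_countable, S_dense⟩ := TopologicalSpace.exists_countable_dense C(ι → X, ℝ)
  have : BaireSpace (ι → κ → C(X, ℝ)) := .of_completelyPseudoMetrizable
  obtain ⟨Ψ, hΨ⟩ := (dense_biInter_of_isOpen
    (fun f (_ : f ∈ S \ {0}) ↦ isOpen_approximatingFamilies (κ := κ) f θ)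
    (S_countable.mono sdiff_subset)
    fun f hf ↦ dense_approximatingFamilies hX hf.2 hθ).nonempty
  refine ⟨Ψ, surjective_of_dense_approximate_preimages _ S_dense zero_le_one
    ((by positivity : (0 : ℝ) ≤ _).trans hθ.le) hθ₁ fun f hfS hf ↦ ?_⟩
  obtain ⟨χ, norm_χ, hfχ⟩ := mem_iInter₂.1 hΨ f ⟨hfS, hf⟩
  exact ⟨χ, by simpa using norm_χ, hfχ.le⟩

end Category

end KolmogorovSuperposition

open KolmogorovSuperposition in
theorem kolmogorov_superposition_general {ι κ : Type*} [Fintype ι] [Fintype κ]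
    (hκ : 2 * card ι < card κ) :
    ∃ ψ : ι → κ → ℝ → ℝ,
      (∀ p q, ContinuousOn (ψ p q) (Icc 0 1) ∧ MapsTo (ψ p q) (Icc 0 1) (Icc 0 1)) ∧
      ∀ f : (ι → ℝ) → ℝ, ContinuousOn f (Icc 0 1) →
        ∃ χ : κ → ℝ → ℝ, (∀ q, Continuous (χ q)) ∧
          ∀ x ∈ Icc (0 : ι → ℝ) 1, f x = ∑ q, χ q (∑ p, ψ p q (x p)) := by
  obtain ⟨Ψ₀, hΨ₀⟩ := exists_surjective_superposition (hasFineIslands_unitInterval κ) hκ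
  obtain ⟨a, b, ha, h_mem⟩ := exists_affine_mem_Icc Ψ₀
  let Ψ (p : ι) (q : κ) : C(unitInterval, ℝ) := a • Ψ₀ p q + .const _ b
  have hΨ : Surjective (superposition Ψ) := surjective_superposition_affine hΨ₀ ha b
  refine ⟨fun p q ↦ IccExtend zero_le_one (Ψ p q), fun p q ↦
    ⟨(Ψ p q).continuous.Icc_extend'.continuousOn, fun t _ ↦ h_mem p q _⟩, fun f hf ↦ ?_⟩
  let F : C(ι → unitInterval, ℝ) := ⟨fun x ↦ f fun p ↦ x p,
    hf.comp_continuous (by fun_prop) fun x ↦ ⟨fun p ↦ (x p).2.1, fun p ↦ (x p).2.2⟩⟩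
  obtain ⟨χ, hχ⟩ := hΨ F
  refine ⟨fun q ↦ χ q, fun q ↦ (χ q).continuous, fun x hx ↦ ?_⟩
  have x_mem (p) : x p ∈ Icc (0 : ℝ) 1 := ⟨hx.1 p, hx.2 p⟩
  have F_apply := DFunLike.congr_fun hχ fun p ↦ ⟨x p, x_mem p⟩
  simp_rw [IccExtend_of_mem _ _ (x_mem _)]
  exact F_apply.symm.trans (superposition_apply Ψ χ _)

/-- Kolmogorov Superposition Theorem: every continuous function on the unit cube
`[0,1]^n` (`n ≥ 2`) can be written as `f(x) = ∑_{q=0}^{2n} χ^q (∑_{p=1}^n ψ^{pq}(x_p))`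
with continuous `ψ^{pq} : [0,1] → [0,1]` and continuous `χ^q : ℝ → ℝ`. -/
theorem kolmogorov_superposition (n : ℕ) (hn : 2 ≤ n)
    (f : (Fin n → ℝ) → ℝ) (hf : ContinuousOn f (Set.Icc 0 1)) :
    ∃ (ψ : Fin n → Fin (2 * n + 1) → ℝ → ℝ) (χ : Fin (2 * n + 1) → ℝ → ℝ),
      (∀ p q, ContinuousOn (ψ p q) (Set.Icc 0 1) ∧
        Set.MapsTo (ψ p q) (Set.Icc 0 1) (Set.Icc 0 1)) ∧
      (∀ q, Continuous (χ q)) ∧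
      (∀ x ∈ Set.Icc (0 : Fin n → ℝ) 1,
        f x = ∑ q : Fin (2 * n + 1), χ q (∑ p : Fin n, ψ p q (x p))) := by
  obtain ⟨ψ, hψ, h⟩ := kolmogorov_superposition_general (ι := Fin n) (κ := Fin (2 * n + 1))
    (by simp)
  exact ⟨ψ, (h f hf).imp fun χ hχ ↦ ⟨hψ, hχ⟩⟩
end

section
/- For every n ≥ 2, there exist functions ψ^{pq} : [0,1] → [0,1] (for p ∈ {1,…,n}, q ∈ {0,…,2n}), each Lipschitz continuous with Lipschitz constant 1 and independent of any target function, such that for every continuous function f : [0,1]^n → ℝ there exist continuous functions χ^q : ℝ → ℝ (for q ∈ {0,…,2n}) with f(x_1,…,x_n) = Σ_{q=0}^{2n} χ^q( Σ_{p=1}^n ψ^{pq}(x_p) ) for all (x_1,…,x_n) ∈ [0,1]^n. -/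
/-!
Kahane's Baire category argument, followed by a change of variable.

Fix `m > 2n`. On the grid of mesh `1 / N` shifted by `q / (m N)`, `q < m`, remove from each cell a
gap of relative length `1 / m`: a point of `[0,1]` lies in a gap for at most one `q`, so a point of
`[0,1]ⁿ` has a coordinate in a gap for at most `n` values of `q`. Any family of monotone inner
functions can be perturbed so that each is constant on the remaining cells and, for every `q`, the
`q`-th inner sum separates the product cells. If each outer function then reproduces `f / m` on
them, at most `n` of the `m` terms are wrong at any point, and `f` is approximated with relative
error about `2n / m < 1`. This is an open condition on the family, so by Baire's theorem some
monotone family satisfies it for all `f` in a countable dense set; iterating the approximation makes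
the superposition operator surjective.

Finally, `x ↦ x + ∑ φ x`, summed over all the inner functions `φ`, increases faster than each of
them, so in this new variable, rescaled to `[0,1]`, they are Lipschitz.
-/

namespace KolmogorovSuperposition

open Filter Topology
open scoped unitInterval BoundedContinuousFunction

section ApproximateSurjectivity

variable {𝕜 E F : Type*} [NormedField 𝕜] [NormedAddCommGroup E] [NormedSpace 𝕜 E]
  [NormedAddCommGroup F] [NormedSpace 𝕜 F] {C r : ℝ} (T : E →L[𝕜] F)

theorem surjective_of_forall_exists_norm_sub_le [CompleteSpace E] (hr₀ : 0 ≤ r) (hr₁ : r < 1)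
    (hC : 0 ≤ C) (h : ∀ y, ∃ x, ‖x‖ ≤ C * ‖y‖ ∧ ‖y - T x‖ ≤ r * ‖y‖) :
    Function.Surjective T := by
  intro y
  choose approx norm_approx norm_residual using h
  let residual : ℕ → F := fun k ↦ (fun z ↦ z - T (approx z))^[k] y
  have residual_succ (k) : residual (k + 1) = residual k - T (approx (residual k)) :=
    Function.iterate_succ_apply' _ _ _
  have norm_residual_le (k) : ‖residual k‖ ≤ r ^ k * ‖y‖ := by
    induction k with
    | zero => simp [residual]
    | succ k ih =>
      calc ‖residual (k + 1)‖ ≤ r * ‖residual k‖ := residual_succ k ▸ norm_residual _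
        _ ≤ r * (r ^ k * ‖y‖) := by gcongr
        _ = r ^ (k + 1) * ‖y‖ := by ring
  have summable_approx : Summable fun k ↦ approx (residual k) := by
    refine .of_norm_bounded (((summable_geometric_of_lt_one hr₀ hr₁).mul_right ‖y‖).mul_left C)
      fun k ↦ (norm_approx _).trans ?_
    gcongr
    exact norm_residual_le k
  have sum_eq (K : ℕ) : ∑ k ∈ Finset.range K, T (approx (residual k)) = y - residual K := by
    refine Eq.trans ?_ (Finset.sum_range_sub' residual K)
    exact Finset.sum_congr rfl fun k _ ↦ by rw [residual_succ, sub_sub_cancel]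
  have residual_tendsto : Tendsto residual atTop (𝓝 0) := by
    refine squeeze_zero_norm norm_residual_le ?_
    simpa using (tendsto_pow_atTop_nhds_zero_of_lt_one hr₀ hr₁).mul_const ‖y‖
  refine ⟨∑' k, approx (residual k), tendsto_nhds_unique
    (summable_approx.hasSum.mapL T).tendsto_sum_nat ?_⟩
  simp_rw [sum_eq]
  simpa using residual_tendsto.const_sub y

theorem exists_norm_sub_le_of_dense {D : Set F} (hD : Dense D) (hr₀ : 0 ≤ r) (hr₁ : r < 1)
    (hC : 0 ≤ C) (h : ∀ y ∈ D, ∃ x, ‖x‖ ≤ C * ‖y‖ ∧ ‖y - T x‖ ≤ r * ‖y‖) (y : F) :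
    ∃ x, ‖x‖ ≤ 2 * C * ‖y‖ ∧ ‖y - T x‖ ≤ (1 + r) / 2 * ‖y‖ := by
  rcases eq_or_ne y 0 with rfl | hy
  · exact ⟨0, by simp⟩
  have hy : 0 < ‖y‖ := norm_pos_iff.2 hy
  obtain ⟨d, hdD, hyd⟩ := hD.exists_dist_lt y (ε := (1 - r) / 4 * ‖y‖) (by nlinarith)
  rw [dist_eq_norm] at hyd
  have hd : ‖d‖ ≤ ‖y‖ + (1 - r) / 4 * ‖y‖ := by
    linarith [norm_le_norm_add_norm_sub y d]
  obtain ⟨x, hx, hdx⟩ := h d hdD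
  refine ⟨x, ?_, ?_⟩
  · calc ‖x‖ ≤ C * ‖d‖ := hx
      _ ≤ C * (2 * ‖y‖) := by gcongr; nlinarith
      _ = 2 * C * ‖y‖ := by ring
  · calc ‖y - T x‖ ≤ ‖y - d‖ + ‖d - T x‖ := norm_sub_le_norm_sub_add_norm_sub _ _ _
      _ ≤ (1 - r) / 4 * ‖y‖ + r * (‖y‖ + (1 - r) / 4 * ‖y‖) := by
        gcongr
        exact hdx.trans (by gcongr)
      _ ≤ (1 + r) / 2 * ‖y‖ := by nlinarith [mul_nonneg (sq_nonneg (1 - r)) hy.le]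

theorem surjective_of_dense_exists_norm_sub_le [CompleteSpace E] {D : Set F} (hD : Dense D)
    (hr₀ : 0 ≤ r) (hr₁ : r < 1) (hC : 0 ≤ C)
    (h : ∀ y ∈ D, ∃ x, ‖x‖ ≤ C * ‖y‖ ∧ ‖y - T x‖ ≤ r * ‖y‖) : Function.Surjective T :=
  surjective_of_forall_exists_norm_sub_le T (r := (1 + r) / 2) (C := 2 * C)
    (by linarith) (by linarith) (by positivity) (exists_norm_sub_le_of_dense T hD hr₀ hr₁ hC h)

end ApproximateSurjectivity

section OuterSum

variable {X κ : Type*} [TopologicalSpace X] [CompactSpace X] [Fintype κ]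

/-- The superposition operator `χ ↦ ∑ q, χ q ∘ s q` of a family `s` of functions on a compact
space. The outer functions are taken bounded so that they form a Banach space; nothing is lost,
since only their values on the compact ranges of the `s q` matter. -/
noncomputable def outerSum (s : κ → C(X, ℝ)) : (κ → ℝ →ᵇ ℝ) →L[ℝ] C(X, ℝ) :=
  ∑ q, ((ContinuousMap.linearIsometryBoundedOfCompact X ℝ ℝ).symm : (X →ᵇ ℝ) →L[ℝ] C(X, ℝ)) ∘L
    BoundedContinuousFunction.compContinuousCLM ℝ ℝ (s q) ∘L ContinuousLinearMap.proj q

@[simp]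
theorem outerSum_apply (s : κ → C(X, ℝ)) (χ : κ → ℝ →ᵇ ℝ) (x : X) :
    outerSum s χ x = ∑ q, χ q (s q x) := by
  simp [outerSum]

theorem continuous_outerSum_left (χ : κ → ℝ →ᵇ ℝ) :
    Continuous fun s : κ → C(X, ℝ) ↦ outerSum s χ := by
  have hsum (s : κ → C(X, ℝ)) : outerSum s χ = ∑ q, (χ q).toContinuousMap.comp (s q) := by
    ext x; simp
  simp_rw [hsum]
  fun_prop

/-- The families `s` whose superpositions approximate `f` with relative error less than `θ`,
using outer functions no larger than `f`. -/
def approximants (θ : ℝ) (f : C(X, ℝ)) : Set (κ → C(X, ℝ)) :=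
  {s | ∃ χ : κ → ℝ →ᵇ ℝ, ‖χ‖ ≤ ‖f‖ ∧ ‖f - outerSum s χ‖ < θ * ‖f‖}

theorem isOpen_approximants (θ : ℝ) (f : C(X, ℝ)) :
    IsOpen (approximants θ f : Set (κ → C(X, ℝ))) := by
  have : (approximants θ f : Set (κ → C(X, ℝ))) =
      ⋃ χ ∈ {χ : κ → ℝ →ᵇ ℝ | ‖χ‖ ≤ ‖f‖}, {s | ‖f - outerSum s χ‖ < θ * ‖f‖} := by
    ext s; simp [approximants]
  rw [this]
  exact isOpen_biUnion fun χ _ ↦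
    isOpen_lt (continuous_const.sub (continuous_outerSum_left χ)).norm continuous_const

theorem surjective_outerSum_of_dense {D : Set C(X, ℝ)} (hD : Dense D) {θ : ℝ} (hθ₀ : 0 ≤ θ)
    (hθ₁ : θ < 1) {s : κ → C(X, ℝ)} (hs : ∀ f ∈ D, f ≠ 0 → s ∈ approximants θ f) :
    Function.Surjective (outerSum s) := by
  refine surjective_of_dense_exists_norm_sub_le (outerSum s) hD hθ₀ hθ₁ zero_le_one
    fun f hf ↦ ?_
  rcases eq_or_ne f 0 with rfl | hf0
  · exact ⟨0, by simp⟩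
  · obtain ⟨χ, hχ, hfχ⟩ := hs f hf hf0
    exact ⟨χ, by rwa [one_mul], hfχ.le⟩

theorem exists_norm_le_forall_abs_sub_comp_le {α : Type*} {G : Set α} {s f : α → ℝ} {B ω : ℝ}
    (hfin : (s '' G).Finite) (hB₀ : 0 ≤ B) (hB : ∀ x ∈ G, |f x| ≤ B)
    (hω : ∀ x ∈ G, ∀ y ∈ G, s x = s y → |f x - f y| ≤ ω) :
    ∃ χ : ℝ →ᵇ ℝ, ‖χ‖ ≤ B ∧ ∀ x ∈ G, |f x - χ (s x)| ≤ ω := by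
  have : Finite (s '' G) := hfin
  choose rep rep_mem rep_eq using fun t : s '' G ↦ t.2
  let u : (s '' G) →ᵇ ℝ := .ofNormedAddCommGroupDiscrete (f ∘ rep) B fun t ↦ hB _ (rep_mem t)
  obtain ⟨χ, norm_χ, χ_eq⟩ := u.exists_norm_eq_domRestrict_eq_of_closed hfin.isClosed
  refine ⟨χ, norm_χ ▸ (BoundedContinuousFunction.norm_le hB₀).2 fun t ↦ hB _ (rep_mem t),
    fun x hx ↦ ?_⟩
  have hχx : χ (s x) = f (rep ⟨s x, x, hx, rfl⟩) := DFunLike.congr_fun χ_eq ⟨s x, x, hx, rfl⟩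
  exact hχx ▸ hω x hx _ (rep_mem _) (rep_eq ⟨s x, x, hx, rfl⟩).symm

open scoped Classical in
theorem exists_norm_sub_outerSum_le [Nonempty κ] (f : C(X, ℝ)) (s : κ → C(X, ℝ))
    (G : κ → Set X) {k : ℕ} (hG : ∀ x, Finset.card {q | x ∉ G q} ≤ k)
    (hfin : ∀ q, (s q '' G q).Finite) {ω : ℝ} (hω₀ : 0 ≤ ω)
    (hω : ∀ q, ∀ x ∈ G q, ∀ y ∈ G q, s q x = s q y → |f x - f y| ≤ ω) :
    ∃ χ : κ → ℝ →ᵇ ℝ, ‖χ‖ ≤ ‖f‖ ∧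
      ‖f - outerSum s χ‖ ≤ ω + 2 * k / Fintype.card κ * ‖f‖ := by
  set m : ℝ := (Fintype.card κ : ℝ) with hm
  have hm0 : 0 < m := by positivity
  have hm1 : 1 ≤ m := Nat.one_le_cast.2 Fintype.card_pos
  have hfm (x : X) : |f x / m| ≤ ‖f‖ / m := by
    rw [abs_div, abs_of_pos hm0]; gcongr; exact f.norm_coe_le_norm x
  choose χ norm_χ hχ using fun q ↦ exists_norm_le_forall_abs_sub_comp_le (f := fun x ↦ f x / m)
    (B := ‖f‖ / m) (ω := ω / m) (hfin q) (by positivity) (fun x _ ↦ hfm x)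
    (fun x hx y hy hxy ↦ by
      rw [← sub_div, abs_div, abs_of_pos hm0]; gcongr; exact hω q x hx y hy hxy)
  have hterm (x : X) (q : κ) :
      |f x / m - χ q (s q x)| ≤ ω / m + if x ∉ G q then 2 * (‖f‖ / m) else 0 := by
    split_ifs with hx
    · simpa using hχ q x hx
    · have hχx : |χ q (s q x)| ≤ ‖f‖ / m := ((χ q).norm_coe_le_norm _).trans (norm_χ q)
      have : 0 ≤ ω / m := by positivity
      linarith [abs_sub (f x / m) (χ q (s q x)), hfm x]
  refine ⟨χ, (pi_norm_le_iff_of_nonneg (norm_nonneg f)).2 fun q ↦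
    (norm_χ q).trans (div_le_self (norm_nonneg f) hm1), ?_⟩
  refine (ContinuousMap.norm_le _ (by positivity)).2 fun x ↦ ?_
  calc ‖(f - outerSum s χ) x‖ = |∑ q, (f x / m - χ q (s q x))| := by
        simp [Finset.sum_sub_distrib, ← hm, mul_div_cancel₀ _ hm0.ne']
    _ ≤ ∑ q, (ω / m + if x ∉ G q then 2 * (‖f‖ / m) else 0) :=
        (Finset.abs_sum_le_sum_abs _ _).trans (Finset.sum_le_sum fun q _ ↦ hterm x q)
    _ = ω + Finset.card {q | x ∉ G q} * (2 * (‖f‖ / m)) := by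
        rw [Finset.sum_add_distrib, ← Finset.sum_filter]
        simp [← hm, mul_div_cancel₀ _ hm0.ne']
    _ ≤ ω + k * (2 * (‖f‖ / m)) := by gcongr; exact hG x
    _ = ω + 2 * k / m * ‖f‖ := by ring

end OuterSum

section Stair

variable {a s : ℝ}

/-- The staircase of slope `a`: on `[k, k + 1]` it climbs from `k` to `k + 1` at slope `a` and then
stays at `k + 1`. -/
noncomputable def stair (a s : ℝ) : ℝ := ⌊s⌋ + min 1 (a * Int.fract s)

theorem stair_of_one_le (h : 1 ≤ a * Int.fract s) : stair a s = ⌊s⌋ + 1 := by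
  rw [stair, min_eq_left h]

theorem floor_le_stair (ha : 0 ≤ a) : ⌊s⌋ ≤ stair a s :=
  le_add_of_nonneg_right (le_min zero_le_one (mul_nonneg ha (Int.fract_nonneg s)))

theorem stair_le_floor_add_one : stair a s ≤ ⌊s⌋ + 1 := by
  rw [stair]; gcongr; exact min_le_left _ _

theorem abs_stair_sub_le (ha : 0 ≤ a) : |stair a s - s| ≤ 1 := by
  rw [abs_le]
  constructor <;>
    linarith [floor_le_stair (s := s) ha, stair_le_floor_add_one (a := a) (s := s),
      Int.floor_le s, Int.lt_floor_add_one s]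

theorem continuous_stair (ha : 1 ≤ a) : Continuous (stair a) := by
  have hfract : Continuous fun s : ℝ ↦ min 1 (a * Int.fract s) - Int.fract s :=
    ContinuousOn.comp_fract'' (f := fun u ↦ min 1 (a * u) - u) (by fun_prop) (by simp [ha])
  have : stair a = fun s ↦ s + (min 1 (a * Int.fract s) - Int.fract s) := by
    funext s
    rw [stair, ← Int.self_sub_fract]
    ring
  exact this ▸ continuous_id.add hfract

theorem monotone_stair (ha : 0 ≤ a) : Monotone (stair a) := by
  intro s t hst
  rcases (Int.floor_mono hst).eq_or_lt with hfloor | hfloor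
  · have : Int.fract s ≤ Int.fract t := by
      rw [← Int.self_sub_floor, ← Int.self_sub_floor, hfloor]; gcongr
    rw [stair, stair, hfloor]
    gcongr
  · calc stair a s ≤ ⌊s⌋ + 1 := stair_le_floor_add_one
      _ ≤ ⌊t⌋ := by exact_mod_cast hfloor
      _ ≤ stair a t := floor_le_stair ha

end Stair

section Grid

variable {m N : ℕ} {q : Fin m} {x y : I}

theorem one_le_cast_of_fin (q : Fin m) : (1 : ℝ) ≤ m := Nat.one_le_cast.2 q.pos

/-- The staircase with a tread for each cell of the grid of mesh `1 / N` shifted by `q / (m N)`. -/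
noncomputable def gridStair (N : ℕ) (q : Fin m) : C(I, ℝ) where
  toFun x := stair m (N * x - q / m)
  continuous_toFun := (continuous_stair (one_le_cast_of_fin q)).comp (by fun_prop)

/-- The points of the `q`-th shifted grid on which `gridStair N q` is locally constant; the rest of
the interval is made of gaps occupying a proportion `1 / m` of every cell. -/
def treads (N : ℕ) (q : Fin m) : Set I := {x | 1 ≤ m * Int.fract (N * x - q / m : ℝ)}

/-- The value of `gridStair N q` on the tread of the cell containing `x`. -/
noncomputable def cellIndex (N : ℕ) (q : Fin m) (x : I) : ℤ := ⌊(N * x - q / m : ℝ)⌋ + 1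

theorem gridStair_of_mem_treads (hx : x ∈ treads N q) : gridStair N q x = cellIndex N q x := by
  rw [cellIndex, Int.cast_add, Int.cast_one]
  exact stair_of_one_le hx

theorem monotone_gridStair : Monotone (gridStair N q) := fun x y hxy ↦
  monotone_stair (Nat.cast_nonneg m) (by
    have : (x : ℝ) ≤ y := hxy
    gcongr)

theorem shift_mem_Ico (q : Fin m) : (q / m : ℝ) ∈ Set.Ico 0 1 :=
  ⟨by positivity, (div_lt_one (by linarith [one_le_cast_of_fin q])).2 (by exact_mod_cast q.2)⟩

theorem abs_gridStair_sub_le : |gridStair N q x - N * x| ≤ 2 := by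
  have hstair : |gridStair N q x - (N * x - q / m)| ≤ 1 := abs_stair_sub_le (Nat.cast_nonneg m)
  have hshift := shift_mem_Ico q
  rw [abs_le] at hstair ⊢
  constructor <;> linarith [hshift.1, hshift.2]

theorem abs_gridStair_le : |gridStair N q x| ≤ N + 2 := by
  have hNx : |(N : ℝ) * x| ≤ N := by
    rw [abs_of_nonneg (mul_nonneg (Nat.cast_nonneg N) x.2.1)]
    exact mul_le_of_le_one_right (Nat.cast_nonneg N) x.2.2
  linarith [abs_sub_abs_le_abs_sub (gridStair N q x) (N * x),
    abs_gridStair_sub_le (N := N) (q := q) (x := x)]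

theorem cellIndex_mem_Icc : cellIndex N q x ∈ Set.Icc 0 (N + 1 : ℤ) := by
  have hshift := shift_mem_Ico q
  have hNx₀ : 0 ≤ (N : ℝ) * x := mul_nonneg (Nat.cast_nonneg N) x.2.1
  have hNx₁ : (N : ℝ) * x ≤ N := mul_le_of_le_one_right (Nat.cast_nonneg N) x.2.2
  have hlower : -1 ≤ ⌊(N * x - q / m : ℝ)⌋ := Int.le_floor.2 (by push_cast; linarith [hshift.2])
  have hupper : ⌊(N * x - q / m : ℝ)⌋ ≤ N :=
    Int.floor_le_iff.2 (by push_cast; linarith [hshift.1])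
  exact ⟨by unfold cellIndex; lia, by unfold cellIndex; lia⟩

theorem dist_le_of_cellIndex_eq (hN : 0 < N) (h : cellIndex N q x = cellIndex N q y) :
    dist x y ≤ 1 / N := by
  have hN : (0 : ℝ) < N := Nat.cast_pos.2 hN
  have hcell : |(N * x - q / m : ℝ) - (N * y - q / m)| < 1 :=
    Int.abs_sub_lt_one_of_floor_eq_floor (add_right_cancel h)
  rw [Subtype.dist_eq, Real.dist_eq, le_div_iff₀ hN]
  calc |(x : ℝ) - y| * N = |(N * x - q / m : ℝ) - (N * y - q / m)| := by
        rw [← abs_of_pos hN, ← abs_mul, abs_of_pos hN]; ring_nf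
    _ ≤ 1 := hcell.le

theorem floor_mul_emod_eq_of_fract_lt {t : ℝ} (h : m * Int.fract (t - q / m) < 1) :
    ⌊m * t⌋ % m = q := by
  have hm : (0 : ℝ) < m := by linarith [one_le_cast_of_fin q]
  have hfloor : ⌊m * t⌋ = q + m * ⌊t - q / m⌋ := by
    have hmt : m * t = q + m * ⌊t - q / m⌋ + m * Int.fract (t - q / m) := by
      rw [add_assoc, ← mul_add, Int.floor_add_fract]; field_simp; ring
    rw [Int.floor_eq_iff]
    push_cast
    constructor <;> nlinarith [Int.fract_nonneg (t - q / m)]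
  rw [hfloor, Int.add_mul_emod_self_left]
  exact Int.emod_eq_of_lt (by positivity) (by exact_mod_cast q.2)

open scoped Classical in
theorem card_notMem_treads_le_one (x : I) : Finset.card {q : Fin m | x ∉ treads N q} ≤ 1 := by
  refine Finset.card_le_one.2 fun q hq q' hq' ↦ ?_
  simp only [treads, Finset.mem_filter_univ, Set.mem_ofPred_eq, not_le] at hq hq'
  have := (floor_mul_emod_eq_of_fract_lt hq).symm.trans (floor_mul_emod_eq_of_fract_lt hq')
  exact Fin.ext (by exact_mod_cast this)

open scoped Classical in
theorem card_notMem_pi_treads_le {ι : Type*} [Fintype ι] (x : ι → I) :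
    Finset.card {q : Fin m | x ∉ Set.univ.pi fun _ ↦ treads N q} ≤ Fintype.card ι := by
  have hsub : ({q : Fin m | x ∉ Set.univ.pi fun _ ↦ treads N q} : Finset (Fin m)) ⊆
      Finset.univ.biUnion fun p ↦ {q | x p ∉ treads N q} := by
    intro q hq
    simpa using hq
  simpa using (Finset.card_le_card hsub).trans
    (Finset.card_biUnion_le_card_mul _ _ 1 fun p _ ↦ card_notMem_treads_le_one (x p))

end Grid

section Generic

variable {ι : Type*} {η : ℝ}

theorem exists_mem_Ioo_notMem_of_countable {B : Set ℝ} (hB : B.Countable) (hη : 0 < η) :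
    ∃ t ∈ Set.Ioo 0 η, t ∉ B :=
  let ⟨t, htB, ht⟩ := (hB.dense_compl ℝ).exists_between hη
  ⟨t, ht, htB⟩

theorem exists_forall_sum_mul_notMem [Finite ι] (s : Finset ι) {B : Set ℝ} (hB : B.Countable)
    (hη : 0 < η) :
    ∃ c : ι → ℝ, (∀ p, c p ∈ Set.Ioo 0 η) ∧
      ∀ j : ι → ℤ, (∃ p ∈ s, j p ≠ 0) → ∑ p ∈ s, c p * j p ∉ B := by
  classical
  induction s using Finset.induction_on with
  | empty => exact ⟨fun _ ↦ η / 2, fun _ ↦ ⟨by linarith, by linarith⟩, by simp⟩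
  | insert p₀ s hp₀ ih =>
    obtain ⟨c, hc, hcB⟩ := ih
    have hcount : (⋃ j : ι → ℤ, (fun b ↦ (b - ∑ p ∈ s, c p * j p) / j p₀) '' B).Countable :=
      Set.countable_iUnion fun j ↦ hB.image _
    obtain ⟨t, ht, htB⟩ := exists_mem_Ioo_notMem_of_countable hcount hη
    refine ⟨Function.update c p₀ t, fun p ↦ ?_, fun j hj hmem ↦ ?_⟩
    · rcases eq_or_ne p p₀ with rfl | hp
      · rwa [Function.update_self]
      · rw [Function.update_of_ne hp]; exact hc p
    have hsum : ∑ p ∈ insert p₀ s, Function.update c p₀ t p * j p =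
        t * j p₀ + ∑ p ∈ s, c p * j p := by
      rw [Finset.sum_insert hp₀, Function.update_self]
      congr 1
      refine Finset.sum_congr rfl fun p hp ↦ ?_
      rw [Function.update_of_ne (ne_of_mem_of_not_mem hp hp₀)]
    rw [hsum] at hmem
    rcases eq_or_ne (j p₀) 0 with hj₀ | hj₀
    · refine hcB j ?_ (by simpa [hj₀] using hmem)
      simpa [hj₀] using hj
    · refine htB (Set.mem_iUnion.2 ⟨j, _, hmem, ?_⟩)
      have : (j p₀ : ℝ) ≠ 0 := Int.cast_ne_zero.2 hj₀
      field_simp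
      ring

theorem exists_forall_injective_add_sum_mul [Fintype ι] {Q : Type*} [Countable Q]
    (A : Q → (ι → ℤ) → ℝ) (hη : 0 < η) :
    ∃ c : ι → ℝ, (∀ p, c p ∈ Set.Ioo 0 η) ∧
      ∀ q, Function.Injective fun j : ι → ℤ ↦ A q j + ∑ p, c p * j p := by
  obtain ⟨c, hc, hcA⟩ := exists_forall_sum_mul_notMem (Finset.univ : Finset ι)
    (Set.countable_range fun z : Q × (ι → ℤ) × (ι → ℤ) ↦ A z.1 z.2.2 - A z.1 z.2.1) hη
  refine ⟨c, hc, fun q j k hjk ↦ ?_⟩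
  by_contra hne
  obtain ⟨p, hp⟩ := Function.ne_iff.1 hne
  refine hcA (j - k) ⟨p, Finset.mem_univ p, sub_ne_zero.2 hp⟩ ⟨(q, j, k), ?_⟩
  simp only [Pi.sub_apply, Int.cast_sub, mul_sub, Finset.sum_sub_distrib]
  linarith

end Generic

section InnerFamilies

variable {ι : Type*} {m N : ℕ}

/-- A family `φ` of inner functions on the unit interval, `φ p q` being applied to the coordinate
`p` in the `q`-th term of the superposition. -/
abbrev InnerFamily (ι : Type*) (m : ℕ) : Type _ := ι → Fin m → C(I, ℝ)

/-- The families of monotone inner functions: the complete metric space on which Baire's theorem is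
applied. Monotonicity is what makes the Lipschitz reparametrisation possible. -/
def monotoneFamilies (ι : Type*) (m : ℕ) : Set (InnerFamily ι m) := {φ | ∀ p q, Monotone (φ p q)}

theorem isClosed_monotoneFamilies : IsClosed (monotoneFamilies ι m) := by
  simp only [monotoneFamilies, Set.ofPred_forall]
  refine isClosed_iInter fun p ↦ isClosed_iInter fun q ↦ isClosed_monotone.preimage ?_
  fun_prop

/-- The family `φ` made constant on the treads of the shifted grids of mesh `1 / N`, with multiples
of the staircases added in order to separate the values of the inner sums on distinct cells. -/
noncomputable def perturb (φ : InnerFamily ι m) (N : ℕ) (c : ι → ℝ) : InnerFamily ι m :=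
  fun p q ↦
    { toFun x := Set.IccExtend zero_le_one (φ p q) (gridStair N q x / N) + c p * gridStair N q x
      continuous_toFun := by fun_prop }

theorem perturb_apply (φ : InnerFamily ι m) (N : ℕ) (c : ι → ℝ) (p : ι) (q : Fin m) (x : I) :
    perturb φ N c p q x =
      Set.IccExtend zero_le_one (φ p q) (gridStair N q x / N) + c p * gridStair N q x :=
  rfl

theorem perturb_mem_monotoneFamilies {φ : InnerFamily ι m} (hφ : φ ∈ monotoneFamilies ι m)
    {c : ι → ℝ} (hc : ∀ p, 0 ≤ c p) : perturb φ N c ∈ monotoneFamilies ι m := fun p q x y hxy ↦ by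
  have hstair := monotone_gridStair (N := N) (q := q) hxy
  rw [perturb_apply, perturb_apply]
  exact add_le_add ((hφ p q).IccExtend zero_le_one (by gcongr))
    (mul_le_mul_of_nonneg_left hstair (hc p))

theorem eventually_abs_IccExtend_gridStair_sub_lt (g : C(I, ℝ)) (q : Fin m) {ε : ℝ} (hε : 0 < ε) :
    ∀ᶠ N : ℕ in atTop, ∀ x,
      |Set.IccExtend zero_le_one g (gridStair N q x / N) - g x| < ε := by
  have huc : UniformContinuous g := CompactSpace.uniformContinuous_of_continuous g.continuous
  obtain ⟨δ, hδ, hgδ⟩ := Metric.uniformContinuous_iff.1 huc ε hε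
  filter_upwards [eventually_gt_atTop 0,
    (tendsto_const_div_atTop_nhds_zero_nat (2 : ℝ)).eventually_lt_const hδ] with N hN hNδ x
  have hN : (0 : ℝ) < N := Nat.cast_pos.2 hN
  refine hgδ (lt_of_le_of_lt ?_ hNδ)
  calc dist (Set.projIcc 0 1 zero_le_one (gridStair N q x / N)) x
      = |(Set.projIcc (0 : ℝ) 1 zero_le_one (gridStair N q x / N) : ℝ) -
          Set.projIcc (0 : ℝ) 1 zero_le_one x| := by
        rw [Set.projIcc_val, Subtype.dist_eq, Real.dist_eq]
    _ ≤ |gridStair N q x / N - x| := Set.abs_projIcc_sub_projIcc _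
    _ = |gridStair N q x - N * x| / N := by
        rw [← abs_of_pos hN, ← abs_div, abs_of_pos hN, sub_div, mul_div_cancel_left₀ _ hN.ne']
    _ ≤ 2 / N := by gcongr; exact abs_gridStair_sub_le

variable [Fintype ι]

theorem eventually_exists_dist_perturb_lt (φ : InnerFamily ι m) {ε : ℝ} (hε : 0 < ε) :
    ∀ᶠ N : ℕ in atTop, ∃ η > 0, ∀ c : ι → ℝ, (∀ p, c p ∈ Set.Ioo 0 η) →
      dist (perturb φ N c) φ < ε := by
  have hquantized : ∀ᶠ N : ℕ in atTop, ∀ p q x,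
      |Set.IccExtend zero_le_one (φ p q) (gridStair N q x / N) - φ p q x| < ε / 2 :=
    eventually_all.2 fun p ↦ eventually_all.2 fun q ↦
      eventually_abs_IccExtend_gridStair_sub_lt (φ p q) q (half_pos hε)
  filter_upwards [hquantized] with N hN
  refine ⟨ε / 2 / (N + 2), by positivity, fun c hc ↦ ?_⟩
  refine (dist_pi_lt_iff hε).2 fun p ↦ (dist_pi_lt_iff hε).2 fun q ↦
    (ContinuousMap.dist_lt_iff hε).2 fun x ↦ ?_
  have hslope : |c p * gridStair N q x| ≤ ε / 2 :=
    calc |c p * gridStair N q x| = c p * |gridStair N q x| := by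
          rw [abs_mul, abs_of_pos (hc p).1]
      _ ≤ ε / 2 / (N + 2) * (N + 2) := by
          gcongr
          · exact (hc p).2.le
          · exact abs_gridStair_le
      _ = ε / 2 := by field_simp
  rw [perturb_apply, Real.dist_eq, add_sub_right_comm]
  linarith [abs_add_le (Set.IccExtend zero_le_one (φ p q) (gridStair N q x / N) - φ p q x)
    (c p * gridStair N q x), hN p q x]

/-- The arguments `x ↦ ∑ p, φ p q (x p)` of the outer functions. -/
noncomputable def innerSum (φ : InnerFamily ι m) (q : Fin m) : C(ι → I, ℝ) :=
  ∑ p, (φ p q).comp ⟨fun x ↦ x p, continuous_apply p⟩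

@[simp]
theorem innerSum_apply (φ : InnerFamily ι m) (q : Fin m) (x : ι → I) :
    innerSum φ q x = ∑ p, φ p q (x p) := by
  simp [innerSum]

theorem continuous_innerSum : Continuous (innerSum : InnerFamily ι m → Fin m → C(ι → I, ℝ)) := by
  unfold innerSum
  fun_prop

/-- The value of the perturbed inner sum on the cell with index `j` of the `q`-th shifted grid. -/
noncomputable def cellValue (φ : InnerFamily ι m) (N : ℕ) (c : ι → ℝ) (q : Fin m) (j : ι → ℤ) : ℝ :=
  ∑ p, Set.IccExtend zero_le_one (φ p q) (j p / N) + ∑ p, c p * j p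

theorem innerSum_perturb_eq_cellValue (φ : InnerFamily ι m) (c : ι → ℝ) {q : Fin m} {x : ι → I}
    (hx : x ∈ Set.univ.pi fun _ ↦ treads N q) :
    innerSum (perturb φ N c) q x = cellValue φ N c q fun p ↦ cellIndex N q (x p) := by
  rw [innerSum_apply, cellValue, ← Finset.sum_add_distrib]
  exact Finset.sum_congr rfl fun p _ ↦ by
    rw [perturb_apply, gridStair_of_mem_treads (hx p (Set.mem_univ p))]

theorem finite_image_innerSum_perturb (φ : InnerFamily ι m) (N : ℕ) (c : ι → ℝ) (q : Fin m) :
    (innerSum (perturb φ N c) q '' Set.univ.pi fun _ ↦ treads N q).Finite := by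
  classical
  refine ((Set.finite_Icc (0 : ι → ℤ) fun _ ↦ N + 1).image (cellValue φ N c q)).subset ?_
  rintro _ ⟨x, hx, rfl⟩
  exact ⟨_, ⟨fun p ↦ cellIndex_mem_Icc.1, fun p ↦ cellIndex_mem_Icc.2⟩,
    (innerSum_perturb_eq_cellValue φ c hx).symm⟩

theorem dist_le_of_innerSum_perturb_eq {φ : InnerFamily ι m} {c : ι → ℝ} {q : Fin m}
    (hinj : Function.Injective (cellValue φ N c q)) (hN : 0 < N) {x y : ι → I}
    (hx : x ∈ Set.univ.pi fun _ ↦ treads N q) (hy : y ∈ Set.univ.pi fun _ ↦ treads N q)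
    (hxy : innerSum (perturb φ N c) q x = innerSum (perturb φ N c) q y) : dist x y ≤ 1 / N := by
  rw [innerSum_perturb_eq_cellValue φ c hx, innerSum_perturb_eq_cellValue φ c hy] at hxy
  exact (dist_pi_le_iff (by positivity)).2 fun p ↦
    dist_le_of_cellIndex_eq hN (congrFun (hinj hxy) p)

theorem eventually_innerSum_perturb_mem_approximants (hm : 0 < m) {θ : ℝ}
    (hθ : 2 * Fintype.card ι / m < θ) {f : C(ι → I, ℝ)} (hf : f ≠ 0) (φ : InnerFamily ι m) :
    ∀ᶠ N : ℕ in atTop, ∀ c, (∀ q, Function.Injective (cellValue φ N c q)) →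
      innerSum (perturb φ N c) ∈ approximants θ f := by
  classical
  have : Nonempty (Fin m) := ⟨⟨0, hm⟩⟩
  have hf : 0 < ‖f‖ := norm_pos_iff.2 hf
  set ω := (θ - 2 * Fintype.card ι / m) / 2 * ‖f‖ with hω
  have hω₀ : 0 < ω := mul_pos (half_pos (sub_pos.2 hθ)) hf
  have huc : UniformContinuous f := CompactSpace.uniformContinuous_of_continuous f.continuous
  obtain ⟨δ, hδ, hfδ⟩ := Metric.uniformContinuous_iff.1 huc ω hω₀
  filter_upwards [eventually_gt_atTop 0,
    (tendsto_const_div_atTop_nhds_zero_nat (1 : ℝ)).eventually_lt_const hδ] with N hN hNδ c hinj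
  obtain ⟨χ, norm_χ, hχ⟩ := exists_norm_sub_outerSum_le f (innerSum (perturb φ N c))
    (fun q ↦ Set.univ.pi fun _ ↦ treads N q) card_notMem_pi_treads_le
    (finite_image_innerSum_perturb φ N c) hω₀.le fun q x hx y hy hxy ↦
      (hfδ ((dist_le_of_innerSum_perturb_eq (hinj q) hN hx hy hxy).trans_lt hNδ)).le
  refine ⟨χ, norm_χ, hχ.trans_lt ?_⟩
  rw [Fintype.card_fin]
  linarith

theorem exists_mem_approximants_dist_lt (hm : 0 < m) {θ : ℝ}
    (hθ : 2 * Fintype.card ι / m < θ) {f : C(ι → I, ℝ)} (hf : f ≠ 0) {φ : InnerFamily ι m}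
    (hφ : φ ∈ monotoneFamilies ι m) {ε : ℝ} (hε : 0 < ε) :
    ∃ φ' ∈ monotoneFamilies ι m, dist φ' φ < ε ∧ innerSum φ' ∈ approximants θ f := by
  obtain ⟨N, ⟨η, hη, hnear⟩, happrox⟩ := ((eventually_exists_dist_perturb_lt φ hε).and
    (eventually_innerSum_perturb_mem_approximants hm hθ hf φ)).exists
  obtain ⟨c, hc, hinj⟩ := exists_forall_injective_add_sum_mul (ι := ι) (Q := Fin m)
    (fun q j ↦ ∑ p, Set.IccExtend zero_le_one (φ p q) (j p / N)) hη
  exact ⟨perturb φ N c, perturb_mem_monotoneFamilies hφ fun p ↦ (hc p).1.le, hnear c hc,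
    happrox c hinj⟩

theorem exists_monotoneFamilies_surjective_outerSum (hm : 2 * Fintype.card ι < m) :
    ∃ φ ∈ monotoneFamilies ι m, Function.Surjective (outerSum (innerSum φ)) := by
  have : CompleteSpace (monotoneFamilies ι m) := isClosed_monotoneFamilies.completeSpace_coe
  have : Nonempty (monotoneFamilies ι m) := ⟨0, fun _ _ ↦ monotone_const⟩
  have hm₀ : 0 < m := Nat.zero_lt_of_lt hm
  have hratio : 2 * Fintype.card ι / m < (1 : ℝ) := by
    rw [div_lt_one (Nat.cast_pos.2 hm₀)]; exact_mod_cast hm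
  obtain ⟨θ, hθ, hθ₁⟩ := exists_between hratio
  obtain ⟨D, hD_countable, hD_dense⟩ := TopologicalSpace.exists_countable_dense C(ι → I, ℝ)
  have hdense : Dense (⋂ f ∈ D \ {0},
      {φ : monotoneFamilies ι m | innerSum φ.1 ∈ approximants θ f}) := by
    refine dense_biInter_of_isOpen (fun f _ ↦ ?_) (hD_countable.mono Set.sdiff_subset)
      fun f hf ↦ Metric.dense_iff.2 fun φ ε hε ↦ ?_
    · exact (isOpen_approximants θ f).preimage (continuous_innerSum.comp continuous_subtype_val)
    · obtain ⟨φ', hφ', hdist, happrox⟩ := exists_mem_approximants_dist_lt hm₀ hθ hf.2 φ.2 hε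
      exact ⟨⟨φ', hφ'⟩, hdist, happrox⟩
  obtain ⟨φ, hφ⟩ := hdense.nonempty
  exact ⟨φ, φ.2, surjective_outerSum_of_dense hD_dense (le_trans (by positivity) hθ.le) hθ₁
    fun f hf hf₀ ↦ Set.mem_iInter₂.1 hφ f ⟨hf, hf₀⟩⟩

end InnerFamilies

section Reparametrization

variable {α : Type*}

theorem abs_sub_le_abs_add_sum_sub [Fintype α] {φ : α → I → ℝ} (hφ : ∀ a, Monotone (φ a))
    (a : α) (x y : I) :
    |φ a x - φ a y| ≤ |(x + ∑ b, φ b x) - (y + ∑ b, φ b y)| := by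
  wlog hxy : y ≤ x generalizing x y
  · rw [abs_sub_comm, abs_sub_comm (_ + _)]
    exact this y x (le_of_not_ge hxy)
  have increment_nonneg (b) : 0 ≤ φ b x - φ b y := sub_nonneg.2 (hφ b hxy)
  have increment_le : φ a x - φ a y ≤ (x + ∑ b, φ b x) - (y + ∑ b, φ b y) := by
    calc φ a x - φ a y ≤ ∑ b, (φ b x - φ b y) :=
          Finset.single_le_sum (f := fun b ↦ φ b x - φ b y) (fun b _ ↦ increment_nonneg b)
            (Finset.mem_univ a)
      _ = ∑ b, φ b x - ∑ b, φ b y := Finset.sum_sub_distrib _ _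
      _ ≤ (x + ∑ b, φ b x) - (y + ∑ b, φ b y) := by linarith [Subtype.coe_le_coe.2 hxy]
  rw [abs_of_nonneg (increment_nonneg a)]
  exact increment_le.trans (le_abs_self _)

theorem exists_surjective_forall_abs_sub_le [Finite α] {φ : α → C(I, ℝ)}
    (hφ : ∀ a, Monotone (φ a)) :
    ∃ (g : C(I, I)) (L : ℝ), 0 < L ∧ Function.Surjective g ∧
      ∀ a x y, |φ a x - φ a y| ≤ L * dist (g x) (g y) := by
  cases nonempty_fintype α
  let G : I → ℝ := fun x ↦ x + ∑ a, φ a x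
  have hG_cont : Continuous G := by fun_prop
  have hG_mono : Monotone G := fun x y hxy ↦
    add_le_add hxy (Finset.sum_le_sum fun a _ ↦ hφ a hxy)
  have hL : 0 < G 1 - G 0 := by
    have : ∑ a, φ a 0 ≤ ∑ a, φ a 1 := Finset.sum_le_sum fun a _ ↦ hφ a zero_le_one
    simp only [G, Set.Icc.coe_zero, Set.Icc.coe_one]
    linarith
  have g_mem (x) : (G x - G 0) / (G 1 - G 0) ∈ I :=
    ⟨div_nonneg (sub_nonneg.2 (hG_mono unitInterval.nonneg')) hL.le,
      (div_le_one hL).2 (sub_le_sub_right (hG_mono unitInterval.le_one') _)⟩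
  let g : C(I, I) := ⟨fun x ↦ ⟨(G x - G 0) / (G 1 - G 0), g_mem x⟩, by fun_prop⟩
  have g_zero : g 0 = 0 := Subtype.ext (by simp [g])
  have g_one : g 1 = 1 := Subtype.ext (by simp [g, hL.ne'])
  refine ⟨g, G 1 - G 0, hL, fun t ↦ ?_, fun a x y ↦ ?_⟩
  · exact mem_range_of_exists_le_of_exists_ge g.continuous
      ⟨0, g_zero.trans_le unitInterval.nonneg'⟩ ⟨1, unitInterval.le_one'.trans_eq g_one.symm⟩
  · have dist_g : (G 1 - G 0) * dist (g x) (g y) = |G x - G y| := by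
      rw [Subtype.dist_eq, Real.dist_eq, ← abs_of_pos hL, ← abs_mul]
      congr 1
      simp only [g, ContinuousMap.coe_mk]
      field_simp
      ring
    exact (abs_sub_le_abs_add_sum_sub hφ a x y).trans_eq dist_g.symm

theorem exists_lipschitzWith_one_reparametrization [Finite α] {φ : α → C(I, ℝ)}
    (hφ : ∀ a, Monotone (φ a)) :
    ∃ (g : C(I, I)) (L : ℝ) (ψ : α → I → I), Function.Surjective g ∧
      (∀ a, LipschitzWith 1 (ψ a)) ∧ ∀ a x, φ a x = φ a 0 + L * ψ a (g x) := by
  obtain ⟨g, L, hL, hg, hφg⟩ := exists_surjective_forall_abs_sub_le hφ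
  obtain ⟨h, hgh⟩ := hg.hasRightInverse
  have ψ_mem (a t) : (φ a (h t) - φ a 0) / L ∈ I := by
    refine ⟨div_nonneg (sub_nonneg.2 (hφ a unitInterval.nonneg')) hL.le, (div_le_one hL).2 ?_⟩
    calc φ a (h t) - φ a 0 ≤ L * dist (g (h t)) (g 0) := (le_abs_self _).trans (hφg a _ _)
      _ ≤ L := mul_le_of_le_one_right hL.le (Real.dist_le_of_mem_Icc_01 (g _).2 (g 0).2)
  refine ⟨g, L, fun a t ↦ ⟨(φ a (h t) - φ a 0) / L, ψ_mem a t⟩, hg,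
    fun a ↦ LipschitzWith.mk_one fun s t ↦ ?_, fun a x ↦ ?_⟩
  · calc dist ((φ a (h s) - φ a 0) / L) ((φ a (h t) - φ a 0) / L)
      _ = |φ a (h s) - φ a (h t)| / L := by
          rw [Real.dist_eq, ← sub_div, sub_sub_sub_cancel_right, abs_div, abs_of_pos hL]
      _ ≤ dist (g (h s)) (g (h t)) := (div_le_iff₀' hL).2 (hφg a _ _)
      _ = dist s t := by rw [hgh s, hgh t]
  · have φ_eq : φ a (h (g x)) = φ a x := by
      have := hφg a (h (g x)) x
      rw [hgh, dist_self, mul_zero, abs_nonpos_iff] at this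
      exact sub_eq_zero.1 this
    simp only [φ_eq]
    field_simp
    ring

theorem exists_lipschitzWith_one_forall_eq_sum {ι : Type*} [Fintype ι] {m : ℕ}
    (hm : 2 * Fintype.card ι < m) :
    ∃ ψ : ι → Fin m → I → I, (∀ p q, LipschitzWith 1 (ψ p q)) ∧
      ∀ f : C(ι → I, ℝ), ∃ χ : Fin m → C(ℝ, ℝ),
        ∀ x, f x = ∑ q, χ q (∑ p, (ψ p q (x p) : ℝ)) := by
  obtain ⟨φ, hφ, hsurj⟩ := exists_monotoneFamilies_surjective_outerSum hm
  obtain ⟨g, L, ψ, hg, hψ, hφψ⟩ := exists_lipschitzWith_one_reparametrization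
    (φ := fun a : ι × Fin m ↦ φ a.1 a.2) fun a ↦ hφ a.1 a.2
  refine ⟨fun p q ↦ ψ (p, q), fun p q ↦ hψ (p, q), fun f ↦ ?_⟩
  obtain ⟨χ, hχ⟩ := hsurj (f.comp ⟨fun x p ↦ g (x p), by fun_prop⟩)
  refine ⟨fun q ↦ ⟨fun t ↦ χ q (∑ p, φ p q 0 + L * t), by fun_prop⟩, fun x ↦ ?_⟩
  obtain ⟨y, rfl⟩ := hg.comp_left x
  have hfy : f (g ∘ y) = ∑ q, χ q (∑ p, φ p q (y p)) := by
    simpa [Function.comp_def] using (DFunLike.congr_fun hχ y).symm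
  rw [hfy]
  refine Finset.sum_congr rfl fun q _ ↦ congrArg (χ q) ?_
  rw [Finset.mul_sum, ← Finset.sum_add_distrib]
  exact Finset.sum_congr rfl fun p _ ↦ hφψ (p, q) (y p)

end Reparametrization

end KolmogorovSuperposition

/-- Fridman's strengthening of the Kolmogorov Superposition Theorem: the universal
inner functions `ψ^{pq} : [0,1] → [0,1]` can be chosen Lipschitz continuous with
Lipschitz constant 1. -/
theorem kolmogorov_superposition_lipschitz_inner (n : ℕ) (hn : 2 ≤ n) :
    ∃ ψ : Fin n → Fin (2 * n + 1) → ℝ → ℝ,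
      (∀ p q, (∀ x ∈ Set.Icc (0 : ℝ) 1, ∀ y ∈ Set.Icc (0 : ℝ) 1,
          |ψ p q x - ψ p q y| ≤ |x - y|) ∧
        Set.MapsTo (ψ p q) (Set.Icc 0 1) (Set.Icc 0 1)) ∧
      ∀ f : (Fin n → ℝ) → ℝ, ContinuousOn f (Set.Icc 0 1) →
        ∃ χ : Fin (2 * n + 1) → ℝ → ℝ,
          (∀ q, Continuous (χ q)) ∧
          (∀ x ∈ Set.Icc (0 : Fin n → ℝ) 1,
            f x = ∑ q : Fin (2 * n + 1), χ q (∑ p : Fin n, ψ p q (x p))) := by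
  obtain ⟨ψ, hψ, hrepr⟩ := KolmogorovSuperposition.exists_lipschitzWith_one_forall_eq_sum
    (ι := Fin n) (m := 2 * n + 1) (by simp)
  refine ⟨fun p q t ↦ ψ p q (Set.projIcc 0 1 zero_le_one t), fun p q ↦ ⟨fun x _ y _ ↦ ?_,
    fun x _ ↦ Subtype.coe_prop _⟩, fun f hf ↦ ?_⟩
  · exact (((hψ p q).dist_le_mul _ _).trans_eq (one_mul _)).trans (Set.abs_projIcc_sub_projIcc _)
  · have hf' : Continuous fun x : Fin n → unitInterval ↦ f fun p ↦ x p :=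
      hf.comp_continuous (by fun_prop) fun x ↦ ⟨fun p ↦ (x p).2.1, fun p ↦ (x p).2.2⟩
    obtain ⟨χ, hχ⟩ := hrepr ⟨_, hf'⟩
    refine ⟨fun q ↦ χ q, fun q ↦ (χ q).continuous, fun x hx ↦ ?_⟩
    refine Eq.trans (congrArg f (funext fun p ↦ ?_))
      (hχ fun p ↦ Set.projIcc 0 1 zero_le_one (x p))
    exact (congrArg Subtype.val (Set.projIcc_of_mem _ ⟨hx.1 p, hx.2 p⟩)).symm
end

section
/- Let n ≥ 2, fix ε with 0 < ε ≤ 1/(2n). Then there exist a real number λ > 0 such that 1 = λ^0, λ^1, …, λ^{n−1} are linearly independent over the rationals, and a continuous function ψ : [−1, 1+2nε] → [0,1], such that for every continuous function f : [0,1]^n → ℝ there exist continuous functions χ^q : ℝ → ℝ (for q ∈ {0,…,2n}) satisfying f(x_1,…,x_n) = Σ_{q=0}^{2n} χ^q( Σ_{p=1}^n λ^{p−1} ψ(x_p + qε) ) for all (x_1,…,x_n) ∈ [0,1]^n. -/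
/-!
The inner function is found by Baire category, following Kahane. Let `K` be compact in `ℝ^ι`, let
`a` be linearly independent over `ℚ`, and take `m > 2 * card ι` shifts by multiples of `ε`.

Cut `ℝ` into cells of a small length `δ` such that `ε` is congruent to `δ / m` modulo `δ`, and
perturb a given function to a `ψ` that is constant, with distinct rational values, on all cells
shortened by `δ / m`. For a given shift `q`, if no coordinate of `x + q * ε` lies in a gap, then
`∑ i, a i * ψ (x i + q * ε)` determines the cells containing these coordinates, hence `f x` up to a
small error. Each coordinate lies in a gap for at most one shift, so at most `card ι` of the `m`
shifts are bad, and averaging over the shifts approximates `f` by a superposition with error close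
to `2 * card ι / m * ‖f‖`.

The functions `ψ` allowing such an approximation of `f` thus form an open dense set. One `ψ` lies
in these sets for all `f` in a countable dense subset of `C(K, ℝ)`, and since the relative error
stays below a constant less than `1`, iterating on the remainder represents every `f` exactly.
-/

open BoundedContinuousFunction Filter Set Topology
open scoped Finset

lemma exists_injective_forall_mem_of_infinite {κ α : Type*} [Countable κ] {A : κ → Set α}
    (hA : ∀ k, (A k).Infinite) : ∃ v : κ → α, Function.Injective v ∧ ∀ k, v k ∈ A k := by
  classical
  have := Encodable.ofCountable κ
  choose t ht hcard using fun k => (hA k).exists_subset_card_eq (Encodable.encode k + 1)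
  have hall (s : Finset κ) : #s ≤ #(s.biUnion t) := by
    obtain rfl | hs := s.eq_empty_or_nonempty
    · simp
    obtain ⟨k, hk, hmax⟩ := s.exists_max_image Encodable.encode hs
    calc #s = #(s.image Encodable.encode) :=
          (Finset.card_image_of_injective s Encodable.encode_injective).symm
      _ ≤ #(Finset.range (Encodable.encode k + 1)) := Finset.card_le_card fun j hj => by
          obtain ⟨i, hi, rfl⟩ := Finset.mem_image.1 hj
          exact Finset.mem_range_succ_iff.2 (hmax i hi)
      _ = #(t k) := by rw [Finset.card_range, hcard]
      _ ≤ #(s.biUnion t) := Finset.card_le_card (Finset.subset_biUnion_of_mem t hk)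
  obtain ⟨v, hv, hmem⟩ := (Finset.all_card_le_biUnion_card_iff_exists_injective t).1 hall
  exact ⟨v, hv, fun k => ht k (hmem k)⟩

lemma infinite_setOf_abs_ratCast_sub_le (y : ℝ) {r : ℝ} (hr : 0 < r) :
    {v : ℚ | |(v : ℝ) - y| ≤ r}.Infinite := by
  obtain ⟨p, hyp, hpr⟩ := exists_rat_btwn (lt_add_of_pos_right y hr)
  obtain ⟨q, hpq, hqr⟩ := exists_rat_btwn hpr
  refine (Ioo_infinite (Rat.cast_lt.1 hpq)).mono fun v hv => ?_
  have hpv : (p : ℝ) < v := Rat.cast_lt.2 hv.1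
  have hvq : (v : ℝ) < q := Rat.cast_lt.2 hv.2
  rw [mem_ofPred, abs_le]
  constructor <;> linarith

lemma exists_injective_rat_abs_sub_le {κ : Type*} [Countable κ] (φ : κ → ℝ) {r : ℝ} (hr : 0 < r) :
    ∃ v : κ → ℚ, Function.Injective v ∧ ∀ k, |(v k : ℝ) - φ k| ≤ r :=
  exists_injective_forall_mem_of_infinite fun k => infinite_setOf_abs_ratCast_sub_le (φ k) hr

section Fract

variable {R : Type*} [CommRing R] [LinearOrder R] [IsStrictOrderedRing R] [FloorRing R]
  [TopologicalSpace R] [OrderTopology R]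

lemma isClosed_setOf_fract_le [IsTopologicalAddGroup R] (c : R) :
    IsClosed {u : R | Int.fract u ≤ c} := by
  obtain hc | hc := lt_or_ge c 0
  · convert isClosed_empty
    exact eq_empty_of_forall_notMem fun u hu => (hu.trans_lt hc).not_ge (Int.fract_nonneg u)
  refine isOpen_compl_iff.1 (isOpen_iff_mem_nhds.2 fun u hu => ?_)
  have hcu : c < Int.fract u := not_le.1 hu
  have hu_ne : u ≠ ⌊u⌋ := (sub_pos.1 (hc.trans_lt hcu)).ne'
  filter_upwards [(continuousAt_fract hu_ne).eventually_const_lt hcu] with s hs using not_le.2 hs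

lemma continuousOn_floor_setOf_fract_le {c : R} (hc : c < 1) :
    ContinuousOn (Int.floor : R → ℤ) {u | Int.fract u ≤ c} := by
  intro u _
  have hlow : (⌊u⌋ : R) - 1 + c < u := by linarith [Int.floor_le u]
  have hfloor : ∀ᶠ s in 𝓝[{u | Int.fract u ≤ c}] u, ⌊s⌋ = ⌊u⌋ := by
    filter_upwards [self_mem_nhdsWithin,
      mem_nhdsWithin_of_mem_nhds (Ioo_mem_nhds hlow (Int.lt_floor_add_one u))] with s hs hsu
    have hge : ⌊u⌋ - 1 < ⌊s⌋ := by
      rw [← Int.cast_lt (R := R)]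
      push_cast
      linarith [hsu.1, Int.floor_add_fract s, mem_ofPred.1 hs]
    have hle : ⌊s⌋ < ⌊u⌋ + 1 := Int.floor_lt.2 (by exact_mod_cast hsu.2)
    lia
  exact tendsto_nhds_of_eventually_eq hfloor

end Fract

section FractShift

variable {𝕜 : Type*} [Field 𝕜] [LinearOrder 𝕜] [IsStrictOrderedRing 𝕜] [FloorRing 𝕜]

lemma floor_natCast_mul_of_fract {m : ℕ} {y : 𝕜} (hy : 1 - 1 / (m : 𝕜) < Int.fract y) :
    ⌊m * y⌋ = m * ⌊y⌋ + m - 1 := by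
  obtain rfl | hm := m.eq_zero_or_pos
  · rw [Nat.cast_zero, div_zero, sub_zero] at hy
    exact absurd hy (Int.fract_lt_one y).not_gt
  have hm' : (0 : 𝕜) < m := Nat.cast_pos.2 hm
  have hmy : (m : 𝕜) * y = m * ⌊y⌋ + m * Int.fract y := by rw [← mul_add, Int.floor_add_fract]
  have hlow : (m : 𝕜) * (1 - 1 / m) < m * Int.fract y := mul_lt_mul_of_pos_left hy hm'
  have hcancel : (m : 𝕜) * (1 - 1 / m) = m - 1 := by field_simp
  have hup : (m : 𝕜) * Int.fract y < m * 1 := mul_lt_mul_of_pos_left (Int.fract_lt_one y) hm'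
  rw [Int.floor_eq_iff]
  push_cast
  constructor <;> linarith

lemma eq_of_fract_add_mul_gt {m : ℕ} {N : ℤ} {u : 𝕜} {q q' : Fin m}
    (hq : 1 - 1 / (m : 𝕜) < Int.fract (u + q * (N + 1 / m)))
    (hq' : 1 - 1 / (m : 𝕜) < Int.fract (u + q' * (N + 1 / m))) : q = q' := by
  have hm : (m : 𝕜) ≠ 0 := Nat.cast_ne_zero.2 q.pos.ne'
  -- Multiplied by `m`, the `p`-th point has floor congruent to `⌊m * u⌋ + p` modulo `m`, and its
  -- fractional part exceeds `1 - 1 / m` only if that floor is congruent to `-1`.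
  have hmodEq {p : Fin m} (hp : 1 - 1 / (m : 𝕜) < Int.fract (u + p * (N + 1 / m))) :
      (p : ℤ) ≡ -1 - ⌊m * u⌋ [ZMOD m] := by
    have hmul : (m : 𝕜) * (u + p * (N + 1 / m)) = m * u + ((p * (m * N + 1) : ℤ) : 𝕜) := by
      push_cast
      field_simp
    have hfloor := floor_natCast_mul_of_fract hp
    rw [hmul, Int.floor_add_intCast] at hfloor
    refine (Int.modEq_iff_dvd.2 ⟨⌊u + p * (N + 1 / (m : 𝕜))⌋ + 1 - p * N, ?_⟩).symm
    linear_combination hfloor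
  have hnat : (q : ℕ) ≡ q' [MOD m] := Int.natCast_modEq_iff.1 ((hmodEq hq).trans (hmodEq hq').symm)
  exact Fin.ext (hnat.eq_of_lt_of_lt q.isLt q'.isLt)

lemma card_filter_exists_fract_gt_le {ι : Type*} [Fintype ι] (m : ℕ) (N : ℤ) (u : ι → 𝕜) :
    #{q : Fin m | ∃ i, 1 - 1 / (m : 𝕜) < Int.fract (u i + q * (N + 1 / m))} ≤ Fintype.card ι := by
  classical
  calc #{q : Fin m | ∃ i, 1 - 1 / (m : 𝕜) < Int.fract (u i + q * (N + 1 / m))}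
      = #(Finset.univ.biUnion fun i =>
          {q : Fin m | 1 - 1 / (m : 𝕜) < Int.fract (u i + q * (N + 1 / m))}) := by
        congr 1; ext q; simp
    _ ≤ #(Finset.univ : Finset ι) * 1 := Finset.card_biUnion_le_card_mul _ _ _ fun i _ =>
        Finset.card_le_one.2 fun q hq q' hq' =>
          eq_of_fract_add_mul_gt (Finset.mem_filter.1 hq).2 (Finset.mem_filter.1 hq').2
    _ = Fintype.card ι := by simp

lemma exists_pos_lt_eq_intCast_add_mul {ε d s : 𝕜} (hε : 0 < ε) (hd : 0 < d) (hs : 0 ≤ s) :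
    ∃ (N : ℤ) (δ : 𝕜), 0 < δ ∧ δ < d ∧ ε = (N + s) * δ := by
  obtain ⟨N, hN⟩ := exists_nat_gt (ε / d)
  have hNs : 0 < (N : 𝕜) + s := by linarith [div_pos hε hd]
  refine ⟨N, ε / (N + s), div_pos hε hNs, ?_, ?_⟩
  · rw [div_lt_comm₀ hNs hd]
    linarith
  · rw [Int.cast_natCast, mul_div_cancel₀ _ hNs.ne']

end FractShift

lemma exists_norm_le_extension {Y : Type*} [TopologicalSpace Y] [NormalSpace Y] {s : Set Y}
    (hs : IsClosed s) {h : Y → ℝ} (hh : ContinuousOn h s) {C : ℝ} (hC : 0 ≤ C)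
    (hhC : ∀ y ∈ s, |h y| ≤ C) : ∃ g : Y →ᵇ ℝ, ‖g‖ ≤ C ∧ EqOn g h s := by
  let F : s →ᵇ ℝ := ofNormedAddCommGroup (s.domRestrict h)
    (continuousOn_iff_continuous_domRestrict.1 hh) C fun y => hhC y y.2
  obtain ⟨g, hnorm, hg⟩ := exists_norm_eq_domRestrict_eq_of_closed F hs
  refine ⟨g, hnorm.trans_le (norm_ofNormedAddCommGroup_le _ hC _), fun y hy => ?_⟩
  exact DFunLike.congr_fun hg ⟨y, hy⟩

lemma exists_plateau_approximation (ψ₀ : ℝ →ᵇ ℝ) {J : Set ℝ} (hJ : IsCompact J) {r : ℝ}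
    (hr : 0 < r) : ∃ d > 0, ∀ δ, 0 < δ → δ < d → ∀ c < (1 : ℝ),
      ∃ (ψ : ℝ →ᵇ ℝ) (v : ℤ → ℚ), ‖ψ - ψ₀‖ ≤ r ∧ Function.Injective v ∧
        ∀ t ∈ J, Int.fract (t / δ) ≤ c → ψ t = v ⌊t / δ⌋ := by
  obtain ⟨d, hd, hψ₀⟩ := Metric.mem_uniformity_dist.1 <|
    hJ.uniformContinuousAt_of_continuousAt ψ₀ (fun t _ => ψ₀.continuous.continuousAt)
      (Metric.dist_mem_uniformity (half_pos hr))
  refine ⟨d, hd, fun δ hδ hδd c hc => ?_⟩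
  obtain ⟨v, hv, hvψ₀⟩ := exists_injective_rat_abs_sub_le (fun k : ℤ => ψ₀ (k * δ)) (half_pos hr)
  let S : Set ℝ := J ∩ (· / δ) ⁻¹' {u | Int.fract u ≤ c}
  have hS : IsClosed S :=
    hJ.isClosed.inter ((isClosed_setOf_fract_le c).preimage (by fun_prop))
  have hstep : ContinuousOn (fun t : ℝ => (v ⌊t / δ⌋ : ℝ)) S :=
    (continuous_of_discreteTopology (f := fun k : ℤ => (v k : ℝ))).comp_continuousOn <|
      (continuousOn_floor_setOf_fract_le hc).comp (by fun_prop) fun t ht => ht.2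
  have hclose (t : ℝ) (ht : t ∈ S) : |v ⌊t / δ⌋ - ψ₀ t| ≤ r := by
    have hdist : dist t (⌊t / δ⌋ * δ) < d := by
      have hfract : t - ⌊t / δ⌋ * δ = Int.fract (t / δ) * δ := by
        rw [Int.fract, sub_mul, div_mul_cancel₀ t hδ.ne']
      rw [Real.dist_eq, hfract, abs_of_nonneg (mul_nonneg (Int.fract_nonneg _) hδ.le)]
      exact (mul_le_of_le_one_left hδ.le (Int.fract_lt_one _).le).trans_lt hδd
    have hψ₀t : |ψ₀ t - ψ₀ (⌊t / δ⌋ * δ)| < r / 2 := hψ₀ hdist ht.1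
    rw [abs_sub_comm] at hψ₀t
    linarith [abs_sub_le (v ⌊t / δ⌋ : ℝ) (ψ₀ (⌊t / δ⌋ * δ)) (ψ₀ t), hvψ₀ ⌊t / δ⌋]
  obtain ⟨g, hg, hgS⟩ :=
    exists_norm_le_extension hS (hstep.sub ψ₀.continuous.continuousOn) hr.le hclose
  refine ⟨ψ₀ + g, v, by rwa [add_sub_cancel_left], hv, fun t ht hfract => ?_⟩
  rw [BoundedContinuousFunction.add_apply, hgS ⟨ht, hfract⟩, Pi.sub_apply, add_sub_cancel]

lemma exists_boundedContinuous_approx_comp {X : Type*} {F : X → ℝ} (hF : (range F).Finite)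
    {f : X → ℝ} {C η : ℝ} (hC : 0 ≤ C) (hfC : ∀ x, |f x| ≤ C)
    (hfiber : ∀ x y, F x = F y → |f x - f y| ≤ η) :
    ∃ g : ℝ →ᵇ ℝ, ‖g‖ ≤ C ∧ ∀ x, |f x - g (F x)| ≤ η := by
  obtain hX | hX := isEmpty_or_nonempty X
  · exact ⟨0, by simpa using hC, isEmptyElim⟩
  choose! s hs using fun z (hz : z ∈ range F) => hz
  obtain ⟨g, hgC, hg⟩ := exists_norm_le_extension hF.isClosed (h := f ∘ s)
    (hF.continuousOn _) hC fun z _ => hfC (s z)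
  refine ⟨g, hgC, fun x => ?_⟩
  rw [hg (mem_range_self x)]
  exact hfiber _ _ (hs (F x) (mem_range_self x)).symm

lemma norm_sub_inv_card_smul_sum_le {Q E : Type*} [Fintype Q] [Nonempty Q]
    [SeminormedAddCommGroup E] [NormedSpace ℝ E] {y : E} {z : Q → E} {C η : ℝ} (hη : 0 ≤ η)
    (hy : ‖y‖ ≤ C) (hz : ∀ q, ‖z q‖ ≤ C) {B : Finset Q} (hB : ∀ q ∉ B, ‖y - z q‖ ≤ η) :
    ‖y - (Fintype.card Q : ℝ)⁻¹ • ∑ q, z q‖ ≤ η + 2 * #B / Fintype.card Q * C := by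
  classical
  have hcard : (Fintype.card Q : ℝ) ≠ 0 := Nat.cast_ne_zero.2 Fintype.card_ne_zero
  have hpoint (q : Q) : ‖y - z q‖ ≤ η + if q ∈ B then 2 * C else 0 := by
    split_ifs with hq
    · linarith [norm_sub_le y (z q), hz q]
    · simpa using hB q hq
  calc ‖y - (Fintype.card Q : ℝ)⁻¹ • ∑ q, z q‖
      = ‖(Fintype.card Q : ℝ)⁻¹ • ∑ q, (y - z q)‖ := by
        rw [Finset.sum_sub_distrib, Finset.sum_const, Finset.card_univ, smul_sub,
          ← Nat.cast_smul_eq_nsmul ℝ, inv_smul_smul₀ hcard]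
    _ ≤ (Fintype.card Q : ℝ)⁻¹ * ∑ q, (η + if q ∈ B then 2 * C else 0) := by
        rw [norm_smul, norm_inv, RCLike.norm_natCast]
        gcongr
        exact norm_sum_le_of_le _ fun q _ => hpoint q
    _ = η + 2 * #B / Fintype.card Q * C := by
        rw [Finset.sum_add_distrib, Finset.sum_ite_mem, Finset.univ_inter, Finset.sum_const,
          Finset.sum_const, Finset.card_univ, nsmul_eq_mul, nsmul_eq_mul]
        field_simp

section Banach

variable {𝕜 E F : Type*} [NontriviallyNormedField 𝕜] [NormedAddCommGroup E] [NormedSpace 𝕜 E]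
  [NormedAddCommGroup F] [NormedSpace 𝕜 F] {T : E →L[𝕜] F} {C ρ : ℝ}

lemma surjective_of_forall_exists_norm_sub_le [CompleteSpace E] (hC : 0 ≤ C) (hρ₀ : 0 ≤ ρ)
    (hρ : ρ < 1) (hT : ∀ f, ∃ g, ‖g‖ ≤ C * ‖f‖ ∧ ‖f - T g‖ ≤ ρ * ‖f‖) :
    Function.Surjective T := by
  intro f
  choose S hS hres using hT
  let residual (k : ℕ) : F := (fun h => h - T (S h))^[k] f
  have hstep (k : ℕ) : T (S (residual k)) = residual k - residual (k + 1) := by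
    simp only [residual, Function.iterate_succ_apply', sub_sub_cancel]
  have hdecay (k : ℕ) : ‖residual k‖ ≤ ρ ^ k * ‖f‖ := by
    induction k with
    | zero => simp [residual]
    | succ k ih =>
      calc ‖residual (k + 1)‖ = ‖residual k - T (S (residual k))‖ := by
            rw [hstep, sub_sub_cancel]
        _ ≤ ρ * (ρ ^ k * ‖f‖) := (hres _).trans (by gcongr)
        _ = ρ ^ (k + 1) * ‖f‖ := by ring
  have hsummable : Summable fun k => S (residual k) := by
    refine .of_norm_bounded (g := fun k => C * (ρ ^ k * ‖f‖))
      (((summable_geometric_of_lt_one hρ₀ hρ).mul_right _).mul_left _) fun k => ?_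
    exact (hS _).trans (by gcongr; exact hdecay k)
  have hresidual : Tendsto residual atTop (𝓝 0) := by
    refine squeeze_zero_norm hdecay ?_
    simpa using (tendsto_pow_atTop_nhds_zero_of_lt_one hρ₀ hρ).mul_const ‖f‖
  have hpartial (k : ℕ) : ∑ j ∈ Finset.range k, T (S (residual j)) = f - residual k := by
    simp only [hstep, Finset.sum_range_sub', residual, Function.iterate_zero_apply]
  refine ⟨∑' k, S (residual k), ?_⟩
  have hlim := (hsummable.hasSum.mapL T).tendsto_sum_nat
  simp only [hpartial] at hlim
  exact tendsto_nhds_unique hlim (by simpa using hresidual.const_sub f)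

lemma exists_norm_sub_le_of_dense {D : Set F} (hD : Dense D) (hC : 0 ≤ C) (hρ₀ : 0 ≤ ρ)
    (hρ : ρ < 1) (hT : ∀ h ∈ D, ∃ g, ‖g‖ ≤ C * ‖h‖ ∧ ‖h - T g‖ ≤ ρ * ‖h‖) (f : F) :
    ∃ g, ‖g‖ ≤ 2 * C * ‖f‖ ∧ ‖f - T g‖ ≤ (1 + ρ) / 2 * ‖f‖ := by
  obtain rfl | hf := eq_or_ne f 0
  · exact ⟨0, by simp⟩
  have hf' : 0 < ‖f‖ := norm_pos_iff.2 hf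
  obtain ⟨h, hhD, hfh⟩ := hD.exists_dist_lt f (mul_pos (by linarith : 0 < (1 - ρ) / 4) hf')
  rw [dist_eq_norm] at hfh
  obtain ⟨g, hg, hhg⟩ := hT h hhD
  have hh : ‖h‖ ≤ (1 + (1 - ρ) / 4) * ‖f‖ := by
    linarith [norm_le_norm_add_norm_sub f h]
  refine ⟨g, ?_, ?_⟩
  · calc ‖g‖ ≤ C * ((1 + (1 - ρ) / 4) * ‖f‖) := hg.trans (by gcongr)
      _ ≤ C * (2 * ‖f‖) := by gcongr; linarith
      _ = 2 * C * ‖f‖ := by ring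
  · calc ‖f - T g‖ ≤ ‖f - h‖ + ‖h - T g‖ := norm_sub_le_norm_sub_add_norm_sub ..
      _ ≤ (1 - ρ) / 4 * ‖f‖ + ρ * ((1 + (1 - ρ) / 4) * ‖f‖) :=
          add_le_add hfh.le (hhg.trans (by gcongr))
      _ = ((1 + ρ) / 2 - (1 - ρ) ^ 2 / 4) * ‖f‖ := by ring
      _ ≤ (1 + ρ) / 2 * ‖f‖ := by gcongr; linarith [sq_nonneg (1 - ρ)]

lemma surjective_of_dense_exists_norm_sub_le [CompleteSpace E] {D : Set F} (hD : Dense D)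
    (hC : 0 ≤ C) (hρ₀ : 0 ≤ ρ) (hρ : ρ < 1)
    (hT : ∀ h ∈ D, ∃ g, ‖g‖ ≤ C * ‖h‖ ∧ ‖h - T g‖ ≤ ρ * ‖h‖) : Function.Surjective T :=
  surjective_of_forall_exists_norm_sub_le (by positivity : 0 ≤ 2 * C) (by positivity)
    (by linarith : (1 + ρ) / 2 < 1) (exists_norm_sub_le_of_dense hD hC hρ₀ hρ hT)

end Banach

lemma finite_image_floor {ι : Type*} [Finite ι] {K : Set (ι → ℝ)} (hK : Bornology.IsBounded K)
    {δ : ℝ} (hδ : 0 < δ) (τ : ℝ) : ((fun (x : ι → ℝ) i => ⌊(x i + τ) / δ⌋) '' K).Finite := by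
  classical
  have := Fintype.ofFinite ι
  obtain ⟨lo, hlo⟩ := hK.bddBelow
  obtain ⟨hi, hhi⟩ := hK.bddAbove
  refine (Set.finite_Icc (fun i => ⌊(lo i + τ) / δ⌋) fun i => ⌊(hi i + τ) / δ⌋).subset ?_
  rintro _ ⟨x, hx, rfl⟩
  refine ⟨fun i => ?_, fun i => ?_⟩ <;> dsimp only <;> gcongr
  exacts [hlo hx i, hhi hx i]

lemma isCompact_iUnion_image_apply_add {ι : Type*} [Finite ι] {K : Set (ι → ℝ)} (hK : IsCompact K)
    (ε : ℝ) (m : ℕ) :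
    IsCompact (⋃ (q : Fin m) (i : ι), (fun x : ι → ℝ => x i + q * ε) '' K) :=
  isCompact_iUnion fun _ => isCompact_iUnion fun _ => hK.image (by fun_prop)

section Superposition

variable {ι : Type*} [Fintype ι] {m : ℕ}

/-- The argument `∑ i, a i * ψ (x i + τ)` of an outer function: the inner function `ψ`, translated
by `τ`, is applied to every coordinate of `x`. -/
def innerSum (a : ι → ℝ) (ψ : ℝ → ℝ) (τ : ℝ) (x : ι → ℝ) : ℝ :=
  ∑ i, a i * ψ (x i + τ)

lemma continuous_uncurry_innerSum (a : ι → ℝ) (τ : ℝ) :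
    Continuous fun p : (ℝ →ᵇ ℝ) × (ι → ℝ) => innerSum a p.1 τ p.2 :=
  continuous_finsetSum _ fun i _ => continuous_const.mul <|
    continuous_fst.eval (((continuous_apply i).comp continuous_snd).add continuous_const)

lemma continuous_sum_apply_innerSum (a : ι → ℝ) (ε : ℝ) :
    Continuous fun p : (Fin m → ℝ →ᵇ ℝ) × (ℝ →ᵇ ℝ) × (ι → ℝ) =>
      ∑ q, p.1 q (innerSum a p.2.1 (q * ε) p.2.2) :=
  continuous_finsetSum _ fun q _ => ((continuous_apply q).comp continuous_fst).eval <|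
    (continuous_uncurry_innerSum a (q * ε)).comp continuous_snd

/-- The operator sending a family of outer functions `g` to their superposition
`x ↦ ∑ q, g q (innerSum a ψ (q * ε) x)` on `K`. The outer functions are taken bounded so that they
form a Banach space. -/
def superposition (K : Set (ι → ℝ)) (a : ι → ℝ) (ε : ℝ) (ψ : ℝ →ᵇ ℝ) :
    (Fin m → ℝ →ᵇ ℝ) →L[ℝ] C(K, ℝ) where
  toFun g := ⟨fun x => ∑ q, g q (innerSum a ψ (q * ε) x),
    (continuous_sum_apply_innerSum a ε).comp <|
      continuous_const.prodMk (continuous_const.prodMk continuous_subtype_val)⟩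
  map_add' g h := by ext x; simp [Finset.sum_add_distrib]
  map_smul' s g := by ext x; simp [Finset.mul_sum]
  cont := ContinuousMap.continuous_of_continuous_uncurry _ <|
    (continuous_sum_apply_innerSum a ε).comp <|
      continuous_fst.prodMk (continuous_const.prodMk (continuous_subtype_val.comp continuous_snd))

lemma superposition_apply (K : Set (ι → ℝ)) (a : ι → ℝ) (ε : ℝ) (ψ : ℝ →ᵇ ℝ)
    (g : Fin m → ℝ →ᵇ ℝ) (x : K) :
    superposition K a ε ψ g x = ∑ q, g q (innerSum a ψ (q * ε) x) := rfl

lemma continuous_superposition_inner (K : Set (ι → ℝ)) (a : ι → ℝ) (ε : ℝ)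
    (g : Fin m → ℝ →ᵇ ℝ) : Continuous fun ψ => superposition K a ε ψ g :=
  ContinuousMap.continuous_of_continuous_uncurry _ <|
    (continuous_sum_apply_innerSum a ε).comp <|
      continuous_const.prodMk (continuous_fst.prodMk (continuous_subtype_val.comp continuous_snd))

lemma injective_sum_mul_ratCast {κ : Type*} {a : ι → ℝ} (ha : LinearIndependent ℚ a) {v : κ → ℚ}
    (hv : Function.Injective v) :
    Function.Injective fun k : ι → κ => ∑ i, a i * (v (k i) : ℝ) := by
  intro j k hjk
  have hzero : ∑ i, (v (j i) - v (k i)) • a i = 0 := by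
    rw [← sub_eq_zero, ← Finset.sum_sub_distrib] at hjk
    simpa only [Rat.smul_def, Rat.cast_sub, sub_mul, mul_comm (a _)] using hjk
  exact funext fun i => hv (sub_eq_zero.1 (Fintype.linearIndependent_iff.1 ha _ hzero i))

variable {K : Set (ι → ℝ)} {a : ι → ℝ} {ε : ℝ}

lemma exists_outer_approx {f : K → ℝ} {v : ℤ → ℚ} {C δ η : ℝ} (hK : Bornology.IsBounded K)
    (ha : LinearIndependent ℚ a) (hv : Function.Injective v) (hδ : 0 < δ) (hC : 0 ≤ C)
    (hfC : ∀ x, |f x| ≤ C) (hf : ∀ x y : K, dist x y < δ → |f x - f y| ≤ η) (τ : ℝ) :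
    ∃ g : ℝ →ᵇ ℝ, ‖g‖ ≤ C ∧
      ∀ x : K, |f x - g (∑ i, a i * v ⌊(x.1 i + τ) / δ⌋)| ≤ η := by
  refine exists_boundedContinuous_approx_comp ?_ hC hfC fun x y hxy => hf x y ?_
  · refine ((finite_image_floor hK hδ τ).image fun k => ∑ i, a i * (v (k i) : ℝ)).subset ?_
    rintro _ ⟨x, rfl⟩
    exact mem_image_of_mem _ (mem_image_of_mem _ x.2)
  · rw [Subtype.dist_eq, dist_pi_lt_iff hδ]
    intro i
    have hfloor : ⌊(x.1 i + τ) / δ⌋ = ⌊(y.1 i + τ) / δ⌋ :=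
      congrFun (injective_sum_mul_ratCast ha hv hxy) i
    have := Int.abs_sub_lt_one_of_floor_eq_floor hfloor
    rwa [← sub_div, add_sub_add_right_eq_sub, abs_div, abs_of_pos hδ, div_lt_one hδ] at this

/-- The bounded inner functions whose superpositions approximate `f` with relative error less
than `ρ`, by means of outer functions bounded by `‖f‖`. The condition is open in `ψ`, since the
outer functions witnessing it can be kept. -/
def approximatingInner (m : ℕ) (a : ι → ℝ) (ε ρ : ℝ) [CompactSpace K] (f : C(K, ℝ)) :
    Set (ℝ →ᵇ ℝ) :=
  {ψ | ∃ g : Fin m → ℝ →ᵇ ℝ, ‖g‖ ≤ ‖f‖ ∧ ‖f - superposition K a ε ψ g‖ < ρ * ‖f‖}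

lemma isOpen_approximatingInner [CompactSpace K] (ρ : ℝ) (f : C(K, ℝ)) :
    IsOpen (approximatingInner m a ε ρ f) := by
  simp only [approximatingInner, ofPred_exists, ofPred_and]
  refine isOpen_iUnion fun g => isOpen_const.inter (isOpen_lt ?_ continuous_const)
  exact (continuous_const.sub (continuous_superposition_inner K a ε g)).norm

lemma norm_sub_superposition_average_le [CompactSpace K] [NeZero m] {f : C(K, ℝ)} {ψ : ℝ →ᵇ ℝ}
    {g : Fin m → ℝ →ᵇ ℝ} {v : ℤ → ℚ} {N : ℤ} {δ η : ℝ} (hδ : 0 < δ) (hη : 0 ≤ η)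
    (hε : ε = (N + 1 / m) * δ)
    (hψ : ∀ (q : Fin m) (i : ι) (x : K), Int.fract ((x.1 i + q * ε) / δ) ≤ 1 - 1 / m →
      ψ (x.1 i + q * ε) = v ⌊(x.1 i + q * ε) / δ⌋)
    (hgf : ∀ q, ‖g q‖ ≤ ‖f‖)
    (hg : ∀ (q : Fin m) (x : K), |f x - g q (∑ i, a i * v ⌊(x.1 i + q * ε) / δ⌋)| ≤ η) :
    ‖f - superposition K a ε ψ ((m : ℝ)⁻¹ • g)‖ ≤ η + 2 * Fintype.card ι / m * ‖f‖ := by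
  refine (ContinuousMap.norm_le _ (by positivity)).2 fun x => ?_
  let B : Finset (Fin m) :=
    {q | ∃ i, 1 - 1 / (m : ℝ) < Int.fract (x.1 i / δ + q * (N + 1 / m))}
  have hB : #B ≤ Fintype.card ι := card_filter_exists_fract_gt_le m N fun i => x.1 i / δ
  have hgood (q : Fin m) (hq : q ∉ B) : ‖f x - g q (innerSum a ψ (q * ε) x)‖ ≤ η := by
    have hinner : innerSum a ψ (q * ε) x = ∑ i, a i * v ⌊(x.1 i + q * ε) / δ⌋ := by
      refine Finset.sum_congr rfl fun i _ => congrArg _ (hψ q i x ?_)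
      have hshift : (x.1 i + q * ε) / δ = x.1 i / δ + q * (N + 1 / m) := by
        rw [hε, add_div, ← mul_assoc, mul_div_cancel_right₀ _ hδ.ne']
      rw [hshift]
      simp only [B, Finset.mem_filter_univ, not_exists, not_lt] at hq
      exact hq i
    rw [hinner]
    exact hg q x
  have hsum : superposition K a ε ψ ((m : ℝ)⁻¹ • g) x =
      (Fintype.card (Fin m) : ℝ)⁻¹ • ∑ q, g q (innerSum a ψ (q * ε) x) := by
    rw [map_smul, Fintype.card_fin]
    rfl
  rw [ContinuousMap.sub_apply, hsum]
  calc _ ≤ η + 2 * #B / Fintype.card (Fin m) * ‖f‖ :=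
        norm_sub_inv_card_smul_sum_le hη (f.norm_coe_le_norm x)
          (fun q => ((g q).norm_coe_le_norm _).trans (hgf q)) hgood
    _ ≤ η + 2 * Fintype.card ι / m * ‖f‖ := by
        rw [Fintype.card_fin]
        gcongr

lemma dense_approximatingInner [CompactSpace K] (ha : LinearIndependent ℚ a) (hε : 0 < ε) {ρ : ℝ}
    (hm : 0 < m) (hρ : 2 * Fintype.card ι / m < ρ) {f : C(K, ℝ)} (hf : f ≠ 0) :
    Dense (approximatingInner m a ε ρ f) := by
  have hK : IsCompact K := isCompact_iff_compactSpace.2 ‹_›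
  have : NeZero m := ⟨hm.ne'⟩
  have hm1 : (1 : ℝ) ≤ m := Nat.one_le_cast.2 hm
  have hfpos : 0 < ‖f‖ := norm_pos_iff.2 hf
  refine Metric.dense_iff.2 fun ψ₀ r hr => ?_
  obtain ⟨η, hη, hηρ⟩ := exists_between (mul_pos (sub_pos.2 hρ) hfpos)
  obtain ⟨d, hd, hplateau⟩ :=
    exists_plateau_approximation ψ₀ (isCompact_iUnion_image_apply_add hK ε m) (half_pos hr)
  obtain ⟨d', hd', hfd⟩ := Metric.uniformContinuous_iff.1
    (CompactSpace.uniformContinuous_of_continuous f.continuous) η hη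
  obtain ⟨N, δ, hδ, hδd, hεδ⟩ := exists_pos_lt_eq_intCast_add_mul (s := 1 / (m : ℝ)) hε
    (lt_min hd hd') (by positivity)
  obtain ⟨ψ, v, hψψ₀, hv, hψ⟩ := hplateau δ hδ (hδd.trans_le (min_le_left _ _)) (1 - 1 / m)
    (sub_lt_self 1 (by positivity))
  choose g hgf hg using fun q : Fin m => exists_outer_approx hK.isBounded ha hv hδ
    (norm_nonneg f) f.norm_coe_le_norm
    (fun x y hxy => (hfd (hxy.trans (hδd.trans_le (min_le_right _ _)))).le) (q * ε)
  have herror := norm_sub_superposition_average_le hδ hη.le hεδ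
    (fun q i x => hψ _ (mem_iUnion₂.2 ⟨q, i, mem_image_of_mem _ x.2⟩)) hgf hg
  refine ⟨ψ, mem_ball_iff_norm.2 (hψψ₀.trans_lt (half_lt_self hr)), (m : ℝ)⁻¹ • g, ?_, ?_⟩
  · rw [norm_smul, norm_inv, RCLike.norm_natCast]
    exact (mul_le_of_le_one_left (norm_nonneg g) (inv_le_one_of_one_le₀ hm1)).trans
      ((pi_norm_le_iff_of_nonneg (norm_nonneg f)).2 hgf)
  · linarith

lemma exists_surjective_superposition [CompactSpace K] (ha : LinearIndependent ℚ a) (hε : 0 < ε)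
    (hm : 2 * Fintype.card ι < m) :
    ∃ ψ : ℝ →ᵇ ℝ, Function.Surjective (superposition (m := m) K a ε ψ) := by
  have hm₀ : 0 < m := by lia
  have hratio : 2 * (Fintype.card ι : ℝ) / m < 1 := by
    rw [div_lt_one (by positivity)]
    exact_mod_cast hm
  obtain ⟨ρ, hρ, hρ1⟩ := exists_between hratio
  obtain ⟨D, hDcount, hD⟩ := TopologicalSpace.exists_countable_dense C(K, ℝ)
  have hdense : Dense (⋂ f ∈ D \ {0}, approximatingInner m a ε ρ f) :=
    dense_biInter_of_isOpen (fun f _ => isOpen_approximatingInner ρ f)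
      (hDcount.mono sdiff_subset) fun f hf => dense_approximatingInner ha hε hm₀ hρ hf.2
  obtain ⟨ψ, hψ⟩ := hdense.nonempty
  refine ⟨ψ, surjective_of_dense_exists_norm_sub_le hD zero_le_one
    ((by positivity : (0 : ℝ) ≤ _).trans hρ.le) hρ1 fun f hfD => ?_⟩
  obtain rfl | hf := eq_or_ne f 0
  · exact ⟨0, by simp⟩
  · obtain ⟨g, hgf, hg⟩ := mem_iInter₂.1 hψ f ⟨hfD, hf⟩
    exact ⟨g, by rwa [one_mul], hg.le⟩

lemma innerSum_affine (a : ι → ℝ) (ψ : ℝ → ℝ) (s b τ : ℝ) (x : ι → ℝ) :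
    innerSum a (fun t => s * ψ t + b) τ x = s * innerSum a ψ τ x + b * ∑ i, a i := by
  simp only [innerSum, Finset.mul_sum, ← Finset.sum_add_distrib]
  exact Finset.sum_congr rfl fun i _ => by ring

lemma exists_continuous_Icc_zero_one_eq_affine (ψ : ℝ →ᵇ ℝ) :
    ∃ (ψ' : ℝ → ℝ) (s b : ℝ),
      Continuous ψ' ∧ (∀ t, ψ' t ∈ Icc 0 1) ∧ ⇑ψ = fun t => s * ψ' t + b := by
  have hs : 0 < 2 * ‖ψ‖ + 1 := by positivity
  refine ⟨fun t => (ψ t + ‖ψ‖) / (2 * ‖ψ‖ + 1), 2 * ‖ψ‖ + 1, -‖ψ‖, by fun_prop, fun t => ?_, ?_⟩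
  · have hbound := abs_le.1 (ψ.norm_coe_le_norm t)
    exact ⟨div_nonneg (by linarith) hs.le, (div_le_one hs).2 (by linarith)⟩
  · ext t
    field_simp
    ring

end Superposition

lemma linearIndependent_pow_of_transcendental {R A : Type*} [CommRing R] [Ring A] [Algebra R A]
    {x : A} (hx : Transcendental R x) : LinearIndependent R fun k : ℕ => x ^ k := by
  have := (Polynomial.basisMonomials R).linearIndependent.map'
    (Polynomial.aeval x).toLinearMap (LinearMap.ker_eq_bot.2 (transcendental_iff_injective.1 hx))
  simpa [Function.comp_def] using this

lemma exists_pos_transcendental : ∃ x : ℝ, 0 < x ∧ Transcendental ℚ x := by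
  refine ⟨liouvilleNumber (2 : ℕ), ?_, fun h => transcendental_liouvilleNumber le_rfl
    ((IsFractionRing.isAlgebraic_iff ℤ ℚ ℝ).2 h)⟩
  rw [← LiouvilleNumber.partialSum_add_remainder (by norm_num) 0]
  exact add_pos_of_nonneg_of_pos (Finset.sum_nonneg fun _ _ => by positivity)
    (LiouvilleNumber.remainder_pos (by norm_num) 0)

theorem sprecher_superposition_general {ι : Type*} [Fintype ι] {m : ℕ}
    (hm : 2 * Fintype.card ι < m) {a : ι → ℝ} (ha : LinearIndependent ℚ a) {ε : ℝ} (hε : 0 < ε)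
    {K : Set (ι → ℝ)} (hK : IsCompact K) :
    ∃ ψ : ℝ → ℝ, Continuous ψ ∧ (∀ t, ψ t ∈ Icc 0 1) ∧
      ∀ f : (ι → ℝ) → ℝ, ContinuousOn f K → ∃ χ : Fin m → ℝ → ℝ, (∀ q, Continuous (χ q)) ∧
        ∀ x ∈ K, f x = ∑ q, χ q (∑ i, a i * ψ (x i + q * ε)) := by
  have := isCompact_iff_compactSpace.1 hK
  obtain ⟨ψ, hψ⟩ := exists_surjective_superposition (K := K) ha hε hm
  obtain ⟨ψ', s, b, hψ', hψ'mem, hψψ'⟩ := exists_continuous_Icc_zero_one_eq_affine ψ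
  refine ⟨ψ', hψ', hψ'mem, fun f hf => ?_⟩
  obtain ⟨g, hg⟩ := hψ ⟨K.domRestrict f, continuousOn_iff_continuous_domRestrict.1 hf⟩
  refine ⟨fun q t => g q (s * t + b * ∑ i, a i), fun q => by fun_prop, fun x hx => ?_⟩
  calc f x = superposition K a ε ψ g ⟨x, hx⟩ := (DFunLike.congr_fun hg ⟨x, hx⟩).symm
    _ = ∑ q, g q (s * innerSum a ψ' (q * ε) x + b * ∑ i, a i) := by
      simp only [superposition_apply, hψψ', innerSum_affine]

/-- Sprecher's reformulation of the Kolmogorov Superposition Theorem: there exist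
`λ > 0` with `1 = λ^0, λ^1, …, λ^{n-1}` rationally independent and a single continuous
`ψ : [-1, 1 + 2nε] → [0,1]` such that every continuous `f : [0,1]^n → ℝ` equals
`∑_{q=0}^{2n} χ^q (∑_{p=1}^n λ^{p-1} ψ(x_p + qε))` for suitable continuous `χ^q`. -/
theorem sprecher_superposition (n : ℕ) (hn : 2 ≤ n)
    (ε : ℝ) (hε : 0 < ε) (hε' : ε ≤ 1 / (2 * n)) :
    ∃ l : ℝ, 0 < l ∧
      (∀ c : Fin n → ℚ, ∑ p : Fin n, (c p : ℝ) * l ^ (p : ℕ) = 0 → c = 0) ∧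
      ∃ ψ : ℝ → ℝ,
        ContinuousOn ψ (Set.Icc (-1) (1 + 2 * n * ε)) ∧
        Set.MapsTo ψ (Set.Icc (-1) (1 + 2 * n * ε)) (Set.Icc 0 1) ∧
        ∀ f : (Fin n → ℝ) → ℝ, ContinuousOn f (Set.Icc 0 1) →
          ∃ χ : Fin (2 * n + 1) → ℝ → ℝ,
            (∀ q, Continuous (χ q)) ∧
            (∀ x ∈ Set.Icc (0 : Fin n → ℝ) 1,
              f x = ∑ q : Fin (2 * n + 1),
                χ q (∑ p : Fin n, l ^ (p : ℕ) * ψ (x p + ((q : ℕ) : ℝ) * ε))) := by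
  obtain ⟨l, hl, htrans⟩ := exists_pos_transcendental
  have hpow : LinearIndependent ℚ fun p : Fin n => l ^ (p : ℕ) :=
    (linearIndependent_pow_of_transcendental htrans).comp _ Fin.val_injective
  obtain ⟨ψ, hψ, hψmem, hsuper⟩ :=
    sprecher_superposition_general (m := 2 * n + 1) (by simp) hpow hε isCompact_Icc
  refine ⟨l, hl, fun c hc => ?_, ψ, hψ.continuousOn, fun t _ => hψmem t, hsuper⟩
  exact funext (Fintype.linearIndependent_iff.1 hpow c (by simpa only [Rat.smul_def] using hc))
end
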